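/- arXiv:2305.13270 — 2 statements merged into one kernel-verified Lean document; each statement's English description precedes it below -/
import Mathlib

section
/- For all n ≥ 1, K_G^+(ℓ_1^n, ℓ_1^n) = K_G^+(ℓ_1^n, ℓ_∞^n) ≤ K_G, where K_G is the real Grothendieck constant. -/
/-!
The equality is a duality statement. The matrix `G` of a non-negative `A : ℓ₁ⁿ → ℓ_∞ⁿ` is
symmetric. Norming `uA` in `ℓ_∞ⁿ ⊗̂ F` by an element `N` of the dual unit ball, which consists of
operators `ℓ_∞ⁿ → F*`, gives the trace `∑ N_ij u_ik G_kj`, and by symmetry of `G` this does not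
change when `N` and `u` are interchanged. For `F = ℓ₁ⁿ` the pair `(u, N)` runs over the same
unit balls as `(N, u)` does for `F = ℓ_∞ⁿ`, so the two suprema agree
(`projNorm_top_le_of_one`, `exists_top_of_one`). The norming matrices come from the identity
`ℓ_∞ⁿ ⊗̂ ℓ₁ⁿ = ℓ₁ⁿ(ℓ_∞ⁿ)` (`exists_pairing_one`) and, for `ℓ_∞ⁿ ⊗̂ ℓ_∞ⁿ`, from Hahn–Banach applied
to the convex hull of the rank-one sign matrices (`projNorm_top_le`).

For the inequality, `A ≥ 0` and `‖A‖ ≤ 1` mean that `G` is a Gram matrix of vectors `x_k` in a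
Euclidean unit ball. If `‖u : ℓ_∞ⁿ → ℓ_∞ⁿ‖ ≤ 1`, the vectors `y_i = ∑ₖ u_ik x_k` also have norm at
most `1`, and the pairing of `uA` with `N` is `∑ N_ij ⟨y_i, x_j⟩`, which is at most `K` for every
constant `K` in Grothendieck's inequality (`projNorm_top_le_of_mem`).

Since `grothendieckKG` is an infimum of reals, one also needs that some constant is admissible,
i.e. Grothendieck's inequality itself (`eight_mem_grothendieckSet`). It is proved by
self-improvement: vectors are replaced by their Rademacher sums, these are truncated at height
`2`, and by Khintchine's inequality for fourth moments the truncation errors are so small in `L²`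
that a bound `C` for `∑ a_ij ⟨f_i, g_j⟩` improves to `4 S + C / 2`, with `S` the supremum over
signs. Iterating gives `8 S`.
-/

open scoped BigOperators

/-- The projective tensor norm of the element of `X* ⊗ F` corresponding (via the canonical
identification, `X` finite dimensional) to the continuous linear map `u : X → F`. -/
noncomputable def projNorm {X F : Type*} [NormedAddCommGroup X] [NormedSpace ℝ X]
    [NormedAddCommGroup F] [NormedSpace ℝ F] (u : X →L[ℝ] F) : ℝ :=
  sInf { r : ℝ | ∃ (k : ℕ) (η : Fin k → (X →L[ℝ] ℝ)) (f : Fin k → F),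
    (∀ x, u x = ∑ i, η i x • f i) ∧ r = ∑ i, ‖η i‖ * ‖f i‖ }

/-- The Grothendieck constant `K_G(E,F)`.  An element of `E ⊗ F` is encoded as a map
`u : E* → F`, an element of `E* ⊗ F` as a map `E → F`, and `A ⊗ id_F` sends `u` to
`u ∘ Aᵀ`, where `Aᵀ = A.flip : E → E*`. -/
noncomputable def KG (E F : Type*) [NormedAddCommGroup E] [NormedSpace ℝ E]
    [NormedAddCommGroup F] [NormedSpace ℝ F] : ℝ :=
  sSup { r : ℝ | ∃ (A : E →L[ℝ] (E →L[ℝ] ℝ)) (u : (E →L[ℝ] ℝ) →L[ℝ] F),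
    ‖A‖ ≤ 1 ∧ ‖u‖ ≤ 1 ∧ r = projNorm (u.comp A.flip) }

/-- `ρ(E,F)`: the norm of the identity from `E ⊗̌ F` to `E ⊗̂ F`. -/
noncomputable def rho (E F : Type*) [NormedAddCommGroup E] [NormedSpace ℝ E]
    [NormedAddCommGroup F] [NormedSpace ℝ F] : ℝ :=
  sSup { r : ℝ | ∃ u : (E →L[ℝ] ℝ) →L[ℝ] F, ‖u‖ ≤ 1 ∧ r = projNorm u }

/-- `A : E → E*` is non-negative: the corresponding tensor in `E* ⊗ E*` is a (finite) sum of
symmetric tensors `η ⊗ η`, i.e. lies in the convex hull of such tensors. -/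
def IsNonnegMap {E : Type*} [NormedAddCommGroup E] [NormedSpace ℝ E]
    (A : E →L[ℝ] (E →L[ℝ] ℝ)) : Prop :=
  ∃ (k : ℕ) (η : Fin k → (E →L[ℝ] ℝ)), ∀ x, A x = ∑ i, η i x • η i

/-- A tensor `z ∈ E ⊗ E` (encoded as a map `E* → E`) is non-negative if it is a finite sum of
symmetric tensors `e ⊗ e`. -/
def IsNonnegTensor {E : Type*} [NormedAddCommGroup E] [NormedSpace ℝ E]
    (z : (E →L[ℝ] ℝ) →L[ℝ] E) : Prop :=
  ∃ (k : ℕ) (e : Fin k → E), ∀ φ, z φ = ∑ i, φ (e i) • e i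

/-- The positive Grothendieck constant `K_G⁺(E,F)`. -/
noncomputable def KGpos (E F : Type*) [NormedAddCommGroup E] [NormedSpace ℝ E]
    [NormedAddCommGroup F] [NormedSpace ℝ F] : ℝ :=
  sSup { r : ℝ | ∃ (A : E →L[ℝ] (E →L[ℝ] ℝ)) (u : (E →L[ℝ] ℝ) →L[ℝ] F),
    IsNonnegMap A ∧ ‖A‖ ≤ 1 ∧ ‖u‖ ≤ 1 ∧ r = projNorm (u.comp A.flip) }

/-- The factorization constant `f(X,E)` of `X` through `E`. -/
noncomputable def factConst (X E : Type*) [NormedAddCommGroup X] [NormedSpace ℝ X]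
    [NormedAddCommGroup E] [NormedSpace ℝ E] : ℝ :=
  sInf { r : ℝ | ∃ (u : X →L[ℝ] E) (v : E →L[ℝ] X),
    v.comp u = ContinuousLinearMap.id ℝ X ∧ r = ‖u‖ * ‖v‖ }

/-- `γ(E) = sup { tr(BA) : A ≥ 0, B ≥ 0, ‖A‖ ≤ 1, ‖B‖ ≤ 1 }`. -/
noncomputable def gammaConst (E : Type*) [NormedAddCommGroup E] [NormedSpace ℝ E] : ℝ :=
  sSup { r : ℝ | ∃ (A : E →L[ℝ] (E →L[ℝ] ℝ)) (B : (E →L[ℝ] ℝ) →L[ℝ] E),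
    IsNonnegMap A ∧ IsNonnegTensor B ∧ ‖A‖ ≤ 1 ∧ ‖B‖ ≤ 1 ∧
    r = LinearMap.trace ℝ E ((B.comp A : E →L[ℝ] E) : E →ₗ[ℝ] E) }

/-- `ρ⁺(E)`: as `ρ(E,E)` but the supremum is restricted to non-negative tensors. -/
noncomputable def rhoPlus (E : Type*) [NormedAddCommGroup E] [NormedSpace ℝ E] : ℝ :=
  sSup { r : ℝ | ∃ z : (E →L[ℝ] ℝ) →L[ℝ] E,
    IsNonnegTensor z ∧ ‖z‖ ≤ 1 ∧ r = projNorm z }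

/-- `X` has (Rademacher) cotype `q`. -/
def HasCotype (X : Type*) [NormedAddCommGroup X] [NormedSpace ℝ X] (q : ℝ) : Prop :=
  ∃ C > 0, ∀ (n : ℕ) (x : Fin n → X),
    (∑ i, ‖x i‖ ^ q) ^ (1/q) ≤
      C * (((2 : ℝ) ^ n)⁻¹ *
        ∑ ε : Fin n → Bool, ‖∑ i, (if ε i then (1:ℝ) else -1) • x i‖ ^ 2) ^ (1/2 : ℝ)

open scoped ENNReal RealInnerProductSpace

/-- The (real) Grothendieck constant `K_G`: the least `K ≥ 0` such that
`|∑ a_ij ⟪v_i, w_j⟫| ≤ K · sup_{|s_i| = |t_j| = 1} |∑ a_ij s_i t_j|`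
for every real matrix `a` and all unit vectors `v_i, w_j` in a real Hilbert space. -/
noncomputable def grothendieckKG : ℝ :=
  sInf { K : ℝ | 0 ≤ K ∧ ∀ (n m : ℕ) (a : Matrix (Fin n) (Fin n) ℝ)
    (v w : Fin n → EuclideanSpace ℝ (Fin m)),
    (∀ i, ‖v i‖ = 1) → (∀ j, ‖w j‖ = 1) →
    |∑ i, ∑ j, a i j * ⟪v i, w j⟫| ≤
      K * sSup { s : ℝ | ∃ t u : Fin n → ℝ,
        (∀ i, |t i| = 1) ∧ (∀ j, |u j| = 1) ∧ s = |∑ i, ∑ j, a i j * t i * u j| } }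

/-! ### Bilinear forms on sign vectors -/

lemma exists_signs {ι : Type*} (g : ι → ℝ) :
    ∃ s : ι → ℝ, (∀ i, |s i| = 1) ∧ ∀ i, s i * g i = |g i| := by
  refine ⟨fun i => if 0 ≤ g i then 1 else -1, fun i => ?_, fun i => ?_⟩
  · dsimp only; split_ifs <;> simp
  · dsimp only
    split_ifs with h
    · rw [abs_of_nonneg h, one_mul]
    · rw [abs_of_neg (not_le.1 h), neg_one_mul]

lemma abs_sum_mul_le_signs {ι : Type*} [Fintype ι] (t g : ι → ℝ) {c : ℝ}
    (ht : ∀ i, |t i| ≤ c) :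
    ∃ s : ι → ℝ, (∀ i, |s i| = 1) ∧ |∑ i, t i * g i| ≤ c * ∑ i, s i * g i := by
  obtain ⟨s, hs, hsg⟩ := exists_signs g
  refine ⟨s, hs, ?_⟩
  rw [Finset.mul_sum]
  refine (Finset.abs_sum_le_sum_abs _ _).trans (Finset.sum_le_sum fun i _ => ?_)
  rw [hsg, abs_mul]
  exact mul_le_mul_of_nonneg_right (ht i) (abs_nonneg _)

/-- `M` has norm at most `C` as a bilinear form on `ℓ_∞ⁿ × ℓ_∞ⁿ`; it suffices to test this on
sign vectors, the extreme points of the unit ball of `ℓ_∞ⁿ`. -/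
def SignBound {n : ℕ} (M : Fin n → Fin n → ℝ) (C : ℝ) : Prop :=
  ∀ s t : Fin n → ℝ, (∀ i, |s i| = 1) → (∀ j, |t j| = 1) →
    |∑ i, ∑ j, M i j * s i * t j| ≤ C

lemma SignBound.bound {n : ℕ} {M : Fin n → Fin n → ℝ} {C : ℝ} (h : SignBound M C)
    {s t : Fin n → ℝ} {c d : ℝ} (hc : 0 ≤ c) (hd : 0 ≤ d)
    (hs : ∀ i, |s i| ≤ c) (ht : ∀ j, |t j| ≤ d) :
    |∑ i, ∑ j, M i j * s i * t j| ≤ C * c * d := by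
  obtain ⟨s', hs', h1⟩ := abs_sum_mul_le_signs s (fun i => ∑ j, M i j * t j) hs
  obtain ⟨t', ht', h2⟩ := abs_sum_mul_le_signs t (fun j => ∑ i, M i j * s' i) ht
  have e1 : ∑ i, ∑ j, M i j * s i * t j = ∑ i, s i * ∑ j, M i j * t j := by
    simp only [Finset.mul_sum]
    exact Finset.sum_congr rfl fun i _ => Finset.sum_congr rfl fun j _ => by ring
  have e2 : ∑ i, s' i * ∑ j, M i j * t j = ∑ j, t j * ∑ i, M i j * s' i := by
    simp only [Finset.mul_sum]
    rw [Finset.sum_comm]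
    exact Finset.sum_congr rfl fun i _ => Finset.sum_congr rfl fun j _ => by ring
  have e3 : ∑ j, t' j * ∑ i, M i j * s' i = ∑ i, ∑ j, M i j * s' i * t' j := by
    simp only [Finset.mul_sum]
    rw [Finset.sum_comm]
    exact Finset.sum_congr rfl fun i _ => Finset.sum_congr rfl fun j _ => by ring
  rw [e1]
  have h3 := (le_abs_self _).trans (h s' t' hs' ht')
  have h4 : ∑ i, s' i * ∑ j, M i j * t j ≤ C * d := by
    rw [e2]
    refine (le_abs_self _).trans (h2.trans ?_)
    rw [e3, mul_comm C d]
    exact mul_le_mul_of_nonneg_left h3 hd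
  calc _ ≤ c * (C * d) := h1.trans (mul_le_mul_of_nonneg_left h4 hc)
    _ = _ := by ring

/-! ### Moments of Rademacher sums -/

/-- The sign `±1` attached to a Boolean. -/
def sgn (b : Bool) : ℝ := if b then 1 else -1

/-- The value at `ω` of the Rademacher sum with coefficients `f`. -/
def rad {m : ℕ} (f : Fin m → ℝ) (ω : Fin m → Bool) : ℝ := ∑ k, sgn (ω k) * f k

lemma sum_rad_succ {m : ℕ} (f g : Fin (m + 1) → ℝ) (Φ : ℝ → ℝ → ℝ) :
    ∑ ω, Φ (rad f ω) (rad g ω) =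
      ∑ ω : Fin m → Bool, (Φ (f 0 + rad (Fin.tail f) ω) (g 0 + rad (Fin.tail g) ω) +
        Φ (-f 0 + rad (Fin.tail f) ω) (-g 0 + rad (Fin.tail g) ω)) := by
  rw [← (Fin.consEquiv fun _ => Bool).sum_comp, Fintype.sum_prod_type, Fintype.sum_bool,
    ← Finset.sum_add_distrib]
  refine Finset.sum_congr rfl fun ω _ => ?_
  simp [rad, Fin.consEquiv, Fin.sum_univ_succ, sgn, Fin.tail]

lemma sum_rad_mul_rad {m : ℕ} (f g : Fin m → ℝ) :
    ∑ ω, rad f ω * rad g ω = 2 ^ m * ∑ k, f k * g k := by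
  induction m with
  | zero => simp [rad]
  | succ m ih =>
    rw [sum_rad_succ f g (fun x y => x * y)]
    have : ∀ ω : Fin m → Bool, (f 0 + rad (Fin.tail f) ω) * (g 0 + rad (Fin.tail g) ω) +
        (-f 0 + rad (Fin.tail f) ω) * (-g 0 + rad (Fin.tail g) ω) =
        2 * (f 0 * g 0) + 2 * (rad (Fin.tail f) ω * rad (Fin.tail g) ω) := fun ω => by ring
    simp only [this, Finset.sum_add_distrib, ← Finset.mul_sum, ih, Fin.sum_univ_succ]
    simp [Fin.tail]
    ring

/-- Khintchine's inequality for fourth moments. -/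
lemma sum_rad_pow_four {m : ℕ} (f : Fin m → ℝ) :
    ∑ ω, rad f ω ^ 4 ≤ 2 ^ m * (3 * (∑ k, f k ^ 2) ^ 2) := by
  induction m with
  | zero => simp [rad]
  | succ m ih =>
    rw [sum_rad_succ f f (fun x _ => x ^ 4)]
    have : ∀ ω : Fin m → Bool, (f 0 + rad (Fin.tail f) ω) ^ 4 + (-f 0 + rad (Fin.tail f) ω) ^ 4 =
        2 * f 0 ^ 4 + 12 * f 0 ^ 2 * (rad (Fin.tail f) ω * rad (Fin.tail f) ω) +
          2 * rad (Fin.tail f) ω ^ 4 := fun ω => by ring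
    simp only [this, Finset.sum_add_distrib, ← Finset.mul_sum, sum_rad_mul_rad]
    have h := ih (Fin.tail f)
    rw [Fin.sum_univ_succ]
    have h2 : ∑ k, Fin.tail f k * Fin.tail f k = ∑ k : Fin m, f k.succ ^ 2 := by
      simp [Fin.tail, sq]
    have h3 : ∑ k, Fin.tail f k ^ 2 = ∑ k : Fin m, f k.succ ^ 2 := by simp [Fin.tail]
    rw [h3] at h
    rw [h2]
    have h4 : (0:ℝ) ≤ 2 ^ m * f 0 ^ 4 := by positivity
    have h5 : ∑ _ω : Fin m → Bool, f 0 ^ 4 = 2 ^ m * f 0 ^ 4 := by simp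
    rw [h5, pow_succ (2 : ℝ) m]
    linarith

/-! ### Grothendieck's inequality -/

/-- Truncation at height `2`. -/
noncomputable def clip (x : ℝ) : ℝ := max (-2) (min 2 x)

lemma abs_clip_le (x : ℝ) : |clip x| ≤ 2 := by
  unfold clip
  rw [abs_le]
  exact ⟨le_max_left _ _, max_le (by norm_num) (min_le_left _ _)⟩

lemma clip_cases (x : ℝ) : (-2 ≤ x ∧ x ≤ 2 ∧ clip x = x) ∨ (2 ≤ x ∧ clip x = 2) ∨
    (x ≤ -2 ∧ clip x = -2) := by
  unfold clip
  rcases le_total x 2 with h | h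
  · rcases le_total (-2) x with h' | h'
    · left; simp [h, h']
    · right; right; simp [h, h']
  · right; left; simp [h]

lemma clip_sq_le (x : ℝ) : clip x ^ 2 ≤ x ^ 2 := by
  rcases clip_cases x with ⟨_, _, h⟩ | ⟨h', h⟩ | ⟨h', h⟩ <;> rw [h] <;> nlinarith

lemma sub_clip_sq_le (x : ℝ) : (x - clip x) ^ 2 ≤ x ^ 4 / 64 := by
  rcases clip_cases x with ⟨_, _, h⟩ | ⟨h', h⟩ | ⟨h', h⟩ <;> rw [h]
  · simp; positivity
  · have h1 : x - 2 ≤ x ^ 2 / 8 := by nlinarith [sq_nonneg (x - 4)]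
    calc (x - 2) ^ 2 ≤ (x ^ 2 / 8) ^ 2 := pow_le_pow_left₀ (by linarith) h1 2
      _ = _ := by ring
  · have h1 : -x - 2 ≤ x ^ 2 / 8 := by nlinarith [sq_nonneg (x + 4)]
    calc (x - -2) ^ 2 = (-x - 2) ^ 2 := by ring
      _ ≤ (x ^ 2 / 8) ^ 2 := pow_le_pow_left₀ (by linarith) h1 2
      _ = _ := by ring

/-- `C` bounds `|∑ a_ij ⟨f_i, g_j⟩|` over all vectors `f_i`, `g_j` in the unit ball of a
finite-dimensional Hilbert space, written in coordinates. -/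
def HilbertBound {n : ℕ} (a : Fin n → Fin n → ℝ) (C : ℝ) : Prop :=
  ∀ (ι : Type) [Fintype ι] (f g : Fin n → ι → ℝ),
    (∀ i, ∑ k, f i k ^ 2 ≤ 1) → (∀ j, ∑ k, g j k ^ 2 ≤ 1) →
    |∑ i, ∑ j, a i j * ∑ k, f i k * g j k| ≤ C

lemma hilbertBound_sum_abs {n : ℕ} (a : Fin n → Fin n → ℝ) :
    HilbertBound a (∑ i, ∑ j, |a i j|) := by
  intro ι _ f g hf hg
  refine (Finset.abs_sum_le_sum_abs _ _).trans (Finset.sum_le_sum fun i _ => ?_)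
  refine (Finset.abs_sum_le_sum_abs _ _).trans (Finset.sum_le_sum fun j _ => ?_)
  rw [abs_mul]
  refine mul_le_of_le_one_right (abs_nonneg _) ?_
  refine (Finset.abs_sum_le_sum_abs _ _).trans ?_
  have : ∑ k, |f i k * g j k| ≤ ∑ k, (f i k ^ 2 + g j k ^ 2) / 2 := by
    refine Finset.sum_le_sum fun k _ => ?_
    rw [abs_mul, ← sq_abs (f i k), ← sq_abs (g j k)]
    nlinarith [sq_nonneg (|f i k| - |g j k|)]
  rw [← Finset.sum_div, Finset.sum_add_distrib] at this
  linarith [hf i, hg j]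

/-- Scaled form of `HilbertBound`. -/
lemma HilbertBound.scale {n : ℕ} {a : Fin n → Fin n → ℝ} {C : ℝ} (h : HilbertBound a C)
    {ι : Type} [Fintype ι] (f g : Fin n → ι → ℝ) {c d : ℝ} (hc : 0 < c) (hd : 0 < d)
    (hf : ∀ i, ∑ k, f i k ^ 2 ≤ c ^ 2) (hg : ∀ j, ∑ k, g j k ^ 2 ≤ d ^ 2) :
    |∑ i, ∑ j, a i j * ∑ k, f i k * g j k| ≤ c * d * C := by
  have h1 := h ι (fun i k => f i k / c) (fun j k => g j k / d) (fun i => by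
    simp only [div_pow, ← Finset.sum_div]
    exact (div_le_one (by positivity)).2 (hf i)) (fun j => by
    simp only [div_pow, ← Finset.sum_div]
    exact (div_le_one (by positivity)).2 (hg j))
  have h2 : ∑ i, ∑ j, a i j * ∑ k, f i k * g j k =
      c * d * ∑ i, ∑ j, a i j * ∑ k, f i k / c * (g j k / d) := by
    simp only [Finset.mul_sum]
    refine Finset.sum_congr rfl fun i _ => Finset.sum_congr rfl fun j _ =>
      Finset.sum_congr rfl fun k _ => ?_
    field_simp
  rw [h2, abs_mul, abs_of_pos (by positivity)]
  exact mul_le_mul_of_nonneg_left h1 (by positivity)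

/-- Truncating the Rademacher sums at height `2` splits `∑ a_ij ⟨f_i, g_j⟩` into a term with
bounded factors, controlled by `S`, and two terms in which one factor has `L²` norm at most
`1/4`, controlled by `C`. -/
lemma HilbertBound.improve_fin {n m : ℕ} {a : Fin n → Fin n → ℝ} {S C : ℝ} (hS : SignBound a S)
    (h : HilbertBound a C) (f g : Fin n → Fin m → ℝ)
    (hf : ∀ i, ∑ k, f i k ^ 2 ≤ 1) (hg : ∀ j, ∑ k, g j k ^ 2 ≤ 1) :
    |∑ i, ∑ j, a i j * ∑ k, f i k * g j k| ≤ 4 * S + C / 2 := by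
  set r : ℝ := √(2 ^ m) with hr
  have hr2 : r ^ 2 = 2 ^ m := Real.sq_sqrt (by positivity)
  have hr0 : 0 < r := Real.sqrt_pos.2 (by positivity)
  have norm_rad : ∀ φ : Fin m → ℝ, ∑ k, φ k ^ 2 ≤ 1 → ∑ ω, rad φ ω ^ 2 ≤ r ^ 2 := by
    intro φ hφ
    simp only [sq] at hφ ⊢
    rw [sum_rad_mul_rad, ← sq, hr2]
    exact mul_le_of_le_one_right (by positivity) hφ
  have norm_clip : ∀ φ : Fin m → ℝ, ∑ k, φ k ^ 2 ≤ 1 → ∑ ω, clip (rad φ ω) ^ 2 ≤ r ^ 2 :=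
    fun φ hφ => (Finset.sum_le_sum fun ω _ => clip_sq_le _).trans (norm_rad φ hφ)
  have norm_err : ∀ φ : Fin m → ℝ, ∑ k, φ k ^ 2 ≤ 1 →
      ∑ ω, (rad φ ω - clip (rad φ ω)) ^ 2 ≤ (r / 4) ^ 2 := by
    intro φ hφ
    have h1 : ∑ ω, (rad φ ω - clip (rad φ ω)) ^ 2 ≤ (∑ ω, rad φ ω ^ 4) / 64 := by
      rw [Finset.sum_div]
      exact Finset.sum_le_sum fun ω _ => sub_clip_sq_le _
    have h2 := sum_rad_pow_four φ
    have h3 : (∑ k, φ k ^ 2) ^ 2 ≤ 1 := pow_le_one₀ (Finset.sum_nonneg fun _ _ => sq_nonneg _) hφ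
    rw [div_pow, hr2]
    have h4 : (0:ℝ) < 2 ^ m := by positivity
    nlinarith
  have key : 2 ^ m * ∑ i, ∑ j, a i j * ∑ k, f i k * g j k =
      ∑ ω, (∑ i, ∑ j, a i j * clip (rad (f i) ω) * clip (rad (g j) ω)) +
      ∑ i, ∑ j, a i j * ∑ ω, (rad (f i) ω - clip (rad (f i) ω)) * rad (g j) ω +
      ∑ i, ∑ j, a i j * ∑ ω, clip (rad (f i) ω) * (rad (g j) ω - clip (rad (g j) ω)) := by
    rw [Finset.sum_comm (s := (Finset.univ : Finset (Fin m → Bool))), Finset.mul_sum,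
      ← Finset.sum_add_distrib, ← Finset.sum_add_distrib]
    refine Finset.sum_congr rfl fun i _ => ?_
    rw [Finset.sum_comm (s := (Finset.univ : Finset (Fin m → Bool))), Finset.mul_sum, ← Finset.sum_add_distrib, ← Finset.sum_add_distrib]
    refine Finset.sum_congr rfl fun j _ => ?_
    rw [mul_left_comm, ← sum_rad_mul_rad, Finset.mul_sum, Finset.mul_sum, Finset.mul_sum,
      ← Finset.sum_add_distrib, ← Finset.sum_add_distrib]
    exact Finset.sum_congr rfl fun ω _ => by ring
  have b1 : |∑ ω, (∑ i, ∑ j, a i j * clip (rad (f i) ω) * clip (rad (g j) ω))| ≤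
      2 ^ m * (4 * S) := by
    refine (Finset.abs_sum_le_sum_abs _ _).trans ?_
    refine (Finset.sum_le_sum fun ω _ => hS.bound (c := 2) (d := 2) (by norm_num) (by norm_num)
      (fun i => abs_clip_le _) (fun j => abs_clip_le _)).trans ?_
    simp
    linarith
  have b2 := h.scale (fun i ω => rad (f i) ω - clip (rad (f i) ω)) (fun j => rad (g j))
    (c := r / 4) (d := r) (by positivity) hr0 (fun i => norm_err _ (hf i))
    (fun j => norm_rad _ (hg j))
  have b3 := h.scale (fun i ω => clip (rad (f i) ω))
    (fun j ω => rad (g j) ω - clip (rad (g j) ω)) (c := r) (d := r / 4) hr0 (by positivity)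
    (fun i => norm_clip _ (hf i)) (fun j => norm_err _ (hg j))
  have hp : (0:ℝ) < 2 ^ m := by positivity
  refine le_of_mul_le_mul_left ?_ hp
  rw [← abs_of_pos hp, ← abs_mul, abs_of_pos hp, key]
  refine (abs_add_three _ _ _).trans ?_
  have e : r / 4 * r * C = 2 ^ m * (C / 4) := by rw [← hr2]; ring
  have e' : r * (r / 4) * C = 2 ^ m * (C / 4) := by rw [← hr2]; ring
  rw [e] at b2
  rw [e'] at b3
  calc _ ≤ 2 ^ m * (4 * S) + 2 ^ m * (C / 4) + 2 ^ m * (C / 4) := by gcongr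
    _ = _ := by ring

lemma HilbertBound.improve {n : ℕ} {a : Fin n → Fin n → ℝ} {S C : ℝ} (hS : SignBound a S)
    (h : HilbertBound a C) : HilbertBound a (4 * S + C / 2) := by
  intro ι _ f g hf hg
  let e := (Fintype.equivFin ι).symm
  have := h.improve_fin hS (fun i k => f i (e k)) (fun j k => g j (e k))
    (fun i => by rw [e.sum_comp (fun k => f i k ^ 2)]; exact hf i)
    (fun j => by rw [e.sum_comp (fun k => g j k ^ 2)]; exact hg j)
  have e1 : ∀ i j, ∑ k, f i (e k) * g j (e k) = ∑ k, f i k * g j k :=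
    fun i j => e.sum_comp (fun k => f i k * g j k)
  simpa only [e1] using this

/-- Grothendieck's inequality, with the constant `8`. -/
lemma hilbertBound_of_signBound {n : ℕ} {a : Fin n → Fin n → ℝ} {S : ℝ} (hS : SignBound a S) :
    HilbertBound a (8 * S) := by
  set C₀ := ∑ i, ∑ j, |a i j|
  have hS0 : 0 ≤ S := (abs_nonneg _).trans (hS 1 1 (by simp) (by simp))
  have hk : ∀ k : ℕ, HilbertBound a (8 * S + C₀ * (1 / 2) ^ k) := by
    intro k
    induction k with
    | zero =>
      intro ι _ f g hf hg
      have := hilbertBound_sum_abs a ι f g hf hg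
      simp only [pow_zero, mul_one]
      linarith
    | succ k ih =>
      have := ih.improve hS
      convert this using 1
      ring
  intro ι _ f g hf hg
  have ht : Filter.Tendsto (fun k : ℕ => 8 * S + C₀ * (1 / 2 : ℝ) ^ k) Filter.atTop
      (nhds (8 * S + C₀ * 0)) :=
    ((tendsto_pow_atTop_nhds_zero_of_lt_one (by norm_num) (by norm_num)).const_mul _).const_add _
  rw [mul_zero, add_zero] at ht
  exact ge_of_tendsto' ht fun k => hk k ι f g hf hg

/-- The set whose infimum is `grothendieckKG`. -/
def grothendieckSet : Set ℝ :=
  { K : ℝ | 0 ≤ K ∧ ∀ (n m : ℕ) (a : Matrix (Fin n) (Fin n) ℝ)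
    (v w : Fin n → EuclideanSpace ℝ (Fin m)),
    (∀ i, ‖v i‖ = 1) → (∀ j, ‖w j‖ = 1) →
    |∑ i, ∑ j, a i j * ⟪v i, w j⟫| ≤
      K * sSup { s : ℝ | ∃ t u : Fin n → ℝ,
        (∀ i, |t i| = 1) ∧ (∀ j, |u j| = 1) ∧ s = |∑ i, ∑ j, a i j * t i * u j| } }

lemma eight_mem_grothendieckSet : (8 : ℝ) ∈ grothendieckSet := by
  refine ⟨by norm_num, fun n m a v w hv hw => ?_⟩
  have hS : SignBound (fun i j => a i j) (sSup { s : ℝ | ∃ t u : Fin n → ℝ,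
        (∀ i, |t i| = 1) ∧ (∀ j, |u j| = 1) ∧ s = |∑ i, ∑ j, a i j * t i * u j| }) := by
    intro s t hs ht
    refine le_csSup ⟨∑ i, ∑ j, |a i j|, ?_⟩ ⟨s, t, hs, ht, rfl⟩
    rintro _ ⟨t, u, ht, hu, rfl⟩
    refine (Finset.abs_sum_le_sum_abs _ _).trans (Finset.sum_le_sum fun i _ => ?_)
    refine (Finset.abs_sum_le_sum_abs _ _).trans (Finset.sum_le_sum fun j _ => ?_)
    rw [abs_mul, abs_mul, ht, hu, mul_one, mul_one]
  have hnorm : ∀ x : EuclideanSpace ℝ (Fin m), ‖x‖ = 1 → ∑ k, x k ^ 2 ≤ 1 := by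
    intro x hx
    rw [← EuclideanSpace.real_norm_sq_eq, hx, one_pow]
  have := hilbertBound_of_signBound hS (Fin m) (fun i k => v i k) (fun j k => w j k)
    (fun i => hnorm _ (hv i)) (fun j => hnorm _ (hw j))
  simpa [PiLp.inner_apply, mul_comm] using this

/-- Vectors of norm at most `1` are made into unit vectors with the same mutual inner products
by adding one orthogonal coordinate for the `f_i` and another one for the `g_j`. -/
lemma hilbertBound_of_mem_grothendieckSet {K : ℝ} (hK : K ∈ grothendieckSet) {n : ℕ}
    {a : Fin n → Fin n → ℝ} (ha : SignBound a 1) : HilbertBound a K := by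
  intro ι _ f g hf hg
  let e := (Fintype.equivFin (ι ⊕ Bool)).symm
  let F : Fin n → ι ⊕ Bool → ℝ := fun i =>
    Sum.elim (f i) (fun b => if b then √(1 - ∑ k, f i k ^ 2) else 0)
  let G : Fin n → ι ⊕ Bool → ℝ := fun j =>
    Sum.elim (g j) (fun b => if b then 0 else √(1 - ∑ k, g j k ^ 2))
  have h := hK.2 n _ (Matrix.of a) (fun i => WithLp.toLp 2 (fun k => F i (e k)))
    (fun j => WithLp.toLp 2 (fun k => G j (e k))) (fun i => by
      rw [← sq_eq_sq₀ (norm_nonneg _) zero_le_one, EuclideanSpace.real_norm_sq_eq]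
      simp only
      rw [e.sum_comp (fun k => F i k ^ 2)]
      simp [F, Real.sq_sqrt (sub_nonneg.2 (hf i))]) (fun j => by
      rw [← sq_eq_sq₀ (norm_nonneg _) zero_le_one, EuclideanSpace.real_norm_sq_eq]
      simp only
      rw [e.sum_comp (fun k => G j k ^ 2)]
      simp [G, Real.sq_sqrt (sub_nonneg.2 (hg j))])
  have hin : ∀ i j, ⟪(WithLp.toLp 2 (fun k => F i (e k)) : EuclideanSpace ℝ (Fin _)),
      WithLp.toLp 2 (fun k => G j (e k))⟫ = ∑ k, f i k * g j k := by
    intro i j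
    simp only [PiLp.inner_apply]
    rw [e.sum_comp (fun k => ⟪F i k, G j k⟫)]
    simp [F, G, mul_comm]
  simp only [hin, Matrix.of_apply] at h
  refine h.trans (mul_le_of_le_one_right hK.1 (Real.sSup_le ?_ zero_le_one))
  rintro _ ⟨s, t, hs, ht, rfl⟩
  exact ha s t hs ht

/-! ### Functionals and operators on `ℓ₁ⁿ` in coordinates -/

section Coordinates

variable {n : ℕ}

/-- The `j`-th unit vector of `ℓ₁ⁿ`. -/
def basis1 (j : Fin n) : PiLp 1 fun _ : Fin n => ℝ := WithLp.toLp 1 (Pi.single j 1)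

/-- The functional on `ℓ₁ⁿ` with coefficients `c`. -/
noncomputable def dualVec (c : Fin n → ℝ) : (PiLp 1 fun _ : Fin n => ℝ) →L[ℝ] ℝ :=
  ∑ j, c j • PiLp.proj 1 (fun _ : Fin n => ℝ) j

lemma dualVec_apply (c : Fin n → ℝ) (x : PiLp 1 fun _ : Fin n => ℝ) :
    dualVec c x = ∑ j, c j * x j := by
  simp [dualVec]

lemma dualVec_basis1 (c : Fin n → ℝ) (j : Fin n) : dualVec c (basis1 j) = c j := by
  simp [dualVec_apply, basis1]

lemma sum_smul_basis1 (x : PiLp 1 fun _ : Fin n => ℝ) : ∑ j, x j • basis1 j = x := by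
  ext i
  simp [basis1, Pi.single_apply]

lemma norm_basis1 (j : Fin n) : ‖basis1 j‖ = 1 := by
  simp [basis1]

lemma apply_eq_sum {F : Type*} [NormedAddCommGroup F] [NormedSpace ℝ F]
    (T : (PiLp 1 fun _ : Fin n => ℝ) →L[ℝ] F) (x : PiLp 1 fun _ : Fin n => ℝ) :
    T x = ∑ j, x j • T (basis1 j) := by
  conv_lhs => rw [← sum_smul_basis1 x]
  simp

lemma norm_dualVec_le {c : Fin n → ℝ} {C : ℝ} (hC : 0 ≤ C) (h : ∀ j, |c j| ≤ C) :
    ‖dualVec c‖ ≤ C := by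
  refine ContinuousLinearMap.opNorm_le_bound _ hC fun x => ?_
  rw [dualVec_apply, PiLp.norm_eq_of_L1, Finset.mul_sum]
  refine (Finset.abs_sum_le_sum_abs _ _).trans (Finset.sum_le_sum fun j _ => ?_)
  rw [abs_mul]
  exact mul_le_mul_of_nonneg_right (h j) (abs_nonneg _)

lemma abs_apply_basis1_le (φ : (PiLp 1 fun _ : Fin n => ℝ) →L[ℝ] ℝ) (j : Fin n) :
    |φ (basis1 j)| ≤ ‖φ‖ := by
  simpa [norm_basis1] using φ.le_opNorm (basis1 j)

lemma eq_sum_dualVec (φ : (PiLp 1 fun _ : Fin n => ℝ) →L[ℝ] ℝ) :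
    φ = ∑ k, φ (basis1 k) • dualVec (Pi.single k 1) := by
  ext x
  rw [apply_eq_sum φ x]
  simp [dualVec_apply, Pi.single_apply, mul_comm]

variable {p : ENNReal} [Fact (1 ≤ p)]

/-- The matrix of an operator from the dual of `ℓ₁ⁿ` to `ℓ_pⁿ`. -/
noncomputable def entries
    (u : ((PiLp 1 fun _ : Fin n => ℝ) →L[ℝ] ℝ) →L[ℝ] PiLp p fun _ : Fin n => ℝ)
    (i k : Fin n) : ℝ := u (dualVec (Pi.single k 1)) i

omit [Fact (1 ≤ p)] in
lemma apply_eq_entries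
    (u : ((PiLp 1 fun _ : Fin n => ℝ) →L[ℝ] ℝ) →L[ℝ] PiLp p fun _ : Fin n => ℝ)
    (φ : (PiLp 1 fun _ : Fin n => ℝ) →L[ℝ] ℝ) (i : Fin n) :
    u φ i = ∑ k, entries u i k * φ (basis1 k) := by
  conv_lhs => rw [eq_sum_dualVec φ]
  simp [entries, mul_comm]

variable (p) in
/-- The operator from the dual of `ℓ₁ⁿ` to `ℓ_pⁿ` with matrix `M`. -/
noncomputable def ofEntries (M : Fin n → Fin n → ℝ) :
    ((PiLp 1 fun _ : Fin n => ℝ) →L[ℝ] ℝ) →L[ℝ] PiLp p fun _ : Fin n => ℝ :=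
  ((PiLp.continuousLinearEquiv p ℝ fun _ : Fin n => ℝ).symm :
      (Fin n → ℝ) →L[ℝ] PiLp p fun _ : Fin n => ℝ).comp
    (ContinuousLinearMap.pi fun i =>
      ∑ k, M i k • ContinuousLinearMap.apply ℝ ℝ (basis1 k))

omit [Fact (1 ≤ p)] in
lemma ofEntries_apply (M : Fin n → Fin n → ℝ)
    (φ : (PiLp 1 fun _ : Fin n => ℝ) →L[ℝ] ℝ) (i : Fin n) :
    ofEntries p M φ i = ∑ k, M i k * φ (basis1 k) := by
  simp [ofEntries]

omit [Fact (1 ≤ p)] in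
lemma entries_ofEntries (M : Fin n → Fin n → ℝ) : entries (ofEntries p M) = M := by
  ext i k
  simp [entries, ofEntries_apply, dualVec_basis1, Pi.single_apply]

omit [Fact (1 ≤ p)] in
lemma flip_comp_apply (A : (PiLp 1 fun _ : Fin n => ℝ) →L[ℝ] (PiLp 1 fun _ : Fin n => ℝ) →L[ℝ] ℝ)
    (u : ((PiLp 1 fun _ : Fin n => ℝ) →L[ℝ] ℝ) →L[ℝ] PiLp p fun _ : Fin n => ℝ) (i j : Fin n) :
    (u.comp A.flip) (basis1 j) i = ∑ k, entries u i k * A (basis1 k) (basis1 j) := by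
  rw [ContinuousLinearMap.comp_apply, apply_eq_entries]
  rfl

lemma norm_top_le_iff {x : PiLp ⊤ fun _ : Fin n => ℝ} {C : ℝ} (hC : 0 ≤ C) :
    ‖x‖ ≤ C ↔ ∀ i, |x i| ≤ C := by
  constructor
  · exact fun h i => (PiLp.norm_apply_le x i).trans h
  · intro h
    rw [PiLp.norm_eq_ciSup]
    exact Real.iSup_le h hC

/-- The norm of an operator `ℓ_∞ⁿ → ℓ_∞ⁿ` is at least the largest `ℓ₁` norm of a row. -/
lemma row_sum_le_of_norm_le
    {u : ((PiLp 1 fun _ : Fin n => ℝ) →L[ℝ] ℝ) →L[ℝ] PiLp ⊤ fun _ : Fin n => ℝ}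
    (hu : ‖u‖ ≤ 1) (i : Fin n) : ∑ k, |entries u i k| ≤ 1 := by
  obtain ⟨s, hs, hsg⟩ := exists_signs (entries u i)
  have h1 := PiLp.norm_apply_le (u (dualVec s)) i
  have h2 := u.le_of_opNorm_le hu (dualVec s)
  have h3 : ‖dualVec s‖ ≤ 1 := norm_dualVec_le zero_le_one fun j => (hs j).le
  have h4 : u (dualVec s) i = ∑ k, |entries u i k| := by
    rw [apply_eq_entries]
    exact Finset.sum_congr rfl fun k _ => by rw [dualVec_basis1, mul_comm, hsg]
  rw [h4] at h1
  exact (le_abs_self _).trans (h1.trans (by linarith))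

lemma norm_ofEntries_top_le {M : Fin n → Fin n → ℝ} (hM : ∀ i, ∑ k, |M i k| ≤ 1) :
    ‖ofEntries ⊤ M‖ ≤ 1 := by
  refine ContinuousLinearMap.opNorm_le_bound _ zero_le_one fun φ => ?_
  rw [one_mul, norm_top_le_iff (norm_nonneg _)]
  intro i
  rw [ofEntries_apply]
  calc _ ≤ ∑ k, |M i k * φ (basis1 k)| := Finset.abs_sum_le_sum_abs _ _
    _ ≤ ∑ k, |M i k| * ‖φ‖ := Finset.sum_le_sum fun k _ => by
      rw [abs_mul]
      exact mul_le_mul_of_nonneg_left (abs_apply_basis1_le φ k) (abs_nonneg _)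
    _ ≤ ‖φ‖ := by
      rw [← Finset.sum_mul]
      exact mul_le_of_le_one_left (norm_nonneg _) (hM i)

/-- The norm of an operator `ℓ_∞ⁿ → ℓ₁ⁿ` dominates that of the associated bilinear form. -/
lemma signBound_of_norm_le
    {u : ((PiLp 1 fun _ : Fin n => ℝ) →L[ℝ] ℝ) →L[ℝ] PiLp 1 fun _ : Fin n => ℝ}
    (hu : ‖u‖ ≤ 1) : SignBound (entries u) 1 := by
  intro s t hs ht
  have h2 := u.le_of_opNorm_le hu (dualVec t)
  have h3 : ‖dualVec t‖ ≤ 1 := norm_dualVec_le zero_le_one fun j => (ht j).le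
  rw [PiLp.norm_eq_of_L1] at h2
  calc |∑ i, ∑ j, entries u i j * s i * t j| = |∑ i, s i * u (dualVec t) i| := by
        congr 1
        refine Finset.sum_congr rfl fun i _ => ?_
        rw [apply_eq_entries, Finset.mul_sum]
        exact Finset.sum_congr rfl fun j _ => by rw [dualVec_basis1]; ring
    _ ≤ ∑ i, |u (dualVec t) i| := by
        refine (Finset.abs_sum_le_sum_abs _ _).trans (Finset.sum_le_sum fun i _ => ?_)
        rw [abs_mul, hs, one_mul]
    _ ≤ 1 := h2.trans (by linarith)

lemma norm_ofEntries_one_le {M : Fin n → Fin n → ℝ} (hM : SignBound M 1) :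
    ‖ofEntries 1 M‖ ≤ 1 := by
  refine ContinuousLinearMap.opNorm_le_bound _ zero_le_one fun φ => ?_
  obtain ⟨s, hs, hsg⟩ := exists_signs (fun i => ofEntries 1 M φ i)
  have h := hM.bound (s := s) (t := fun j => φ (basis1 j)) zero_le_one (norm_nonneg φ)
    (fun i => (hs i).le) (fun j => abs_apply_basis1_le φ j)
  rw [PiLp.norm_eq_of_L1]
  calc ∑ i, ‖ofEntries 1 M φ i‖ = ∑ i, ∑ j, M i j * s i * φ (basis1 j) := by
        refine Finset.sum_congr rfl fun i _ => ?_
        rw [Real.norm_eq_abs, ← hsg, ofEntries_apply, Finset.mul_sum]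
        exact Finset.sum_congr rfl fun j _ => by ring
    _ ≤ _ := (le_abs_self _).trans (h.trans (by simp))

/-! ### The projective norm and its dual description -/

lemma projNorm_le_of_repr {X F κ : Type*} [NormedAddCommGroup X] [NormedSpace ℝ X]
    [NormedAddCommGroup F] [NormedSpace ℝ F] [Fintype κ] (T : X →L[ℝ] F)
    (η : κ → (X →L[ℝ] ℝ)) (f : κ → F) (h : ∀ x, T x = ∑ i, η i x • f i) :
    projNorm T ≤ ∑ i, ‖η i‖ * ‖f i‖ := by
  let e := (Fintype.equivFin κ).symm
  refine csInf_le ⟨0, ?_⟩ ⟨_, fun i => η (e i), fun i => f (e i), fun x => ?_, ?_⟩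
  · rintro _ ⟨k, η, f, -, rfl⟩
    positivity
  · rw [h, e.sum_comp (fun i => η i x • f i)]
  · rw [e.sum_comp (fun i => ‖η i‖ * ‖f i‖)]

/-- A matrix which is bounded by `1` as a bilinear form on `(ℓ₁ⁿ)* × F` defines a functional of
norm at most `1` for the projective norm. -/
lemma pairing_le_projNorm (T : (PiLp 1 fun _ : Fin n => ℝ) →L[ℝ] PiLp p fun _ : Fin n => ℝ)
    (N : Fin n → Fin n → ℝ)
    (hN : ∀ (η : (PiLp 1 fun _ : Fin n => ℝ) →L[ℝ] ℝ) (f : PiLp p fun _ : Fin n => ℝ),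
      ∑ i, ∑ j, N i j * f i * η (basis1 j) ≤ ‖η‖ * ‖f‖) :
    ∑ i, ∑ j, N i j * T (basis1 j) i ≤ projNorm T := by
  refine le_csInf ⟨_, n, fun j => PiLp.proj 1 (fun _ : Fin n => ℝ) j, fun j => T (basis1 j),
    fun x => apply_eq_sum T x, rfl⟩ ?_
  rintro _ ⟨k, η, f, h, rfl⟩
  refine le_trans (le_of_eq (Eq.symm ?_)) (Finset.sum_le_sum fun l _ => hN (η l) (f l))
  rw [Finset.sum_comm]
  refine Finset.sum_congr rfl fun i _ => ?_
  rw [Finset.sum_comm]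
  refine Finset.sum_congr rfl fun j _ => ?_
  rw [h]
  simp [Finset.mul_sum]
  exact Finset.sum_congr rfl fun l _ => by ring

/-- Duality for the projective norm on `ℓ_∞ⁿ ⊗ ℓ₁ⁿ = ℓ₁ⁿ(ℓ_∞ⁿ)`: a norming matrix has as its
`i`-th row the signed unit vector at the largest coordinate of the `i`-th row of `T`. -/
lemma exists_pairing_one (T : (PiLp 1 fun _ : Fin n => ℝ) →L[ℝ] PiLp 1 fun _ : Fin n => ℝ) :
    ∃ N : Fin n → Fin n → ℝ, (∀ i, ∑ k, |N i k| ≤ 1) ∧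
      projNorm T ≤ ∑ i, ∑ j, N i j * T (basis1 j) i := by
  have hmax : ∀ i : Fin n, ∃ j, ∀ j', |T (basis1 j') i| ≤ |T (basis1 j) i| := fun i => by
    obtain ⟨j, -, hj⟩ := Finset.exists_max_image Finset.univ (fun j => |T (basis1 j) i|)
      ⟨i, Finset.mem_univ i⟩
    exact ⟨j, fun j' => hj j' (Finset.mem_univ _)⟩
  choose J hJ using hmax
  obtain ⟨s, hs, hsg⟩ := exists_signs (fun i => T (basis1 (J i)) i)
  refine ⟨fun i => Pi.single (J i) (s i), fun i => ?_, ?_⟩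
  · rw [Finset.sum_eq_single (J i) (fun k _ hk => by simp [Pi.single_eq_of_ne hk]) (by simp)]
    simp [hs]
  · have h := projNorm_le_of_repr T (fun i => dualVec (fun j => T (basis1 j) i))
      (fun i => basis1 i) (fun x => by
        rw [apply_eq_sum T x]
        ext i
        simp [dualVec_apply, basis1, Pi.single_apply, mul_comm])
    refine h.trans (Finset.sum_le_sum fun i _ => ?_)
    rw [norm_basis1, mul_one]
    refine (norm_dualVec_le (abs_nonneg _) (hJ i)).trans (le_of_eq ?_)
    rw [Finset.sum_eq_single (J i) (fun k _ hk => by simp [Pi.single_eq_of_ne hk]) (by simp)]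
    simp [hsg]

/-- The rank-one sign matrices, i.e. the matrices `s ⊗ t` with `s, t ∈ {±1}ⁿ`. -/
def signMatrices (n : ℕ) : Set (Fin n → Fin n → ℝ) :=
  { z | ∃ s t : Fin n → ℝ, (∀ i, |s i| = 1) ∧ (∀ j, |t j| = 1) ∧ z = fun i j => s i * t j }

lemma finite_signMatrices (n : ℕ) : (signMatrices n).Finite := by
  refine (Set.Finite.pi' (t := fun _ : Fin n => {v : Fin n → ℝ | ∀ j, v j ∈ ({1, -1} : Set ℝ)})
    fun i => Set.Finite.pi' fun j => by simp).subset ?_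
  rintro _ ⟨s, t, hs, ht, rfl⟩ i j
  have : |s i * t j| = 1 := by rw [abs_mul, hs, ht, one_mul]
  simpa using eq_or_eq_neg_of_abs_eq this

lemma projNorm_le_of_mem_convexHull
    (T : (PiLp 1 fun _ : Fin n => ℝ) →L[ℝ] PiLp ⊤ fun _ : Fin n => ℝ) {C : ℝ} (hC : 0 < C)
    (h : (fun i j => T (basis1 j) i / C) ∈ convexHull ℝ (signMatrices n)) :
    projNorm T ≤ C := by
  obtain ⟨κ, _, w, z, hw, hw1, hz, hsum⟩ := mem_convexHull_iff_exists_fintype.1 h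
  choose s t hs ht hst using hz
  refine (projNorm_le_of_repr T (fun k => dualVec (fun j => C * w k * t k j))
    (fun k => WithLp.toLp ⊤ (s k)) (fun x => ?_)).trans ?_
  · rw [apply_eq_sum T x]
    ext i
    have h1 : ∀ j, T (basis1 j) i = ∑ k, C * w k * t k j * s k i := fun j => by
      have := congrFun (congrFun hsum i) j
      rw [eq_div_iff hC.ne'] at this
      rw [← this]
      simp [Finset.sum_mul, hst]
      exact Finset.sum_congr rfl fun k _ => by ring
    simp [dualVec_apply, h1, Finset.mul_sum, Finset.sum_mul]
    rw [Finset.sum_comm]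
    exact Finset.sum_congr rfl fun k _ => Finset.sum_congr rfl fun j _ => by ring
  · calc _ ≤ ∑ k, C * w k := Finset.sum_le_sum fun k _ => by
          have h0 : 0 ≤ C * w k := mul_nonneg hC.le (hw k)
          have h1 : ‖dualVec (fun j => C * w k * t k j)‖ ≤ C * w k :=
            norm_dualVec_le h0 fun j => by rw [abs_mul, ht, mul_one, abs_of_nonneg h0]
          have h2 : ‖(WithLp.toLp ⊤ (s k) : PiLp ⊤ fun _ : Fin n => ℝ)‖ ≤ 1 :=
            (norm_top_le_iff zero_le_one).2 fun i => (hs k i).le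
          exact (mul_le_mul h1 h2 (norm_nonneg _) h0).trans_eq (mul_one _)
      _ = C := by rw [← Finset.mul_sum, hw1, mul_one]

/-- Hahn–Banach duality for the projective norm on `ℓ_∞ⁿ ⊗ ℓ_∞ⁿ`, whose unit ball is the convex
hull of the rank-one sign matrices. -/
lemma projNorm_top_le
    (T : (PiLp 1 fun _ : Fin n => ℝ) →L[ℝ] PiLp ⊤ fun _ : Fin n => ℝ) {C : ℝ}
    (h : ∀ N : Fin n → Fin n → ℝ, SignBound N 1 → ∑ i, ∑ j, N i j * T (basis1 j) i ≤ C) :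
    projNorm T ≤ C := by
  have hC0 : 0 ≤ C := by simpa using h 0 (fun s t _ _ => by simp)
  refine le_of_forall_gt_imp_ge_of_dense fun D hD => ?_
  have hD0 : 0 < D := hC0.trans_lt hD
  refine projNorm_le_of_mem_convexHull T hD0 ?_
  by_contra hmem
  obtain ⟨f, r, hfr, hrf⟩ := geometric_hahn_banach_closed_point (convex_convexHull ℝ _)
    ((finite_signMatrices n).isClosed_convexHull ℝ) hmem
  have hf : ∀ z : Fin n → Fin n → ℝ,
      f z = ∑ i, ∑ j, f (Pi.single i (Pi.single j 1)) * z i j := by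
    intro z
    have hz : z = ∑ i, ∑ j, z i j • (Pi.single i (Pi.single j 1) : Fin n → Fin n → ℝ) := by
      ext a b
      simp [Finset.sum_apply, Pi.single_apply, ite_apply]
    conv_lhs => rw [hz]
    simp [mul_comm]
  have hsign : ∀ s t : Fin n → ℝ, (∀ i, |s i| = 1) → (∀ j, |t j| = 1) →
      |f (fun i j => s i * t j)| < r := by
    intro s t hs ht
    have h1 := hfr _ (subset_convexHull ℝ _ ⟨s, t, hs, ht, rfl⟩)
    have h2 := hfr _ (subset_convexHull ℝ _ ⟨-s, t, by simpa using hs, ht, rfl⟩)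
    have h3 : (fun i j => (-s) i * t j) = -(fun i j => s i * t j : Fin n → Fin n → ℝ) := by
      ext i j; simp
    rw [h3, map_neg] at h2
    exact abs_lt.2 ⟨by linarith, h1⟩
  have hr : 0 < r := (abs_nonneg _).trans_lt (hsign 1 1 (by simp) (by simp))
  have hN := h (fun i j => f (Pi.single i (Pi.single j 1)) / r) (fun s t hs ht => by
    have h1 := (hsign s t hs ht).le
    rw [hf] at h1
    have h2 : ∑ i, ∑ j, f (Pi.single i (Pi.single j 1)) / r * s i * t j =
        (∑ i, ∑ j, f (Pi.single i (Pi.single j 1)) * (s i * t j)) / r := by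
      simp only [Finset.sum_div]
      exact Finset.sum_congr rfl fun i _ => Finset.sum_congr rfl fun j _ => by ring
    rw [h2, abs_div, abs_of_pos hr]
    exact (div_le_one hr).2 h1)
  rw [hf] at hrf
  have h2 : ∑ i, ∑ j, f (Pi.single i (Pi.single j 1)) / r * T (basis1 j) i =
      (∑ i, ∑ j, f (Pi.single i (Pi.single j 1)) * (T (basis1 j) i / D)) * D / r := by
    simp only [Finset.sum_div, Finset.sum_mul]
    refine Finset.sum_congr rfl fun i _ => Finset.sum_congr rfl fun j _ => ?_
    field_simp
  rw [h2, div_le_iff₀ hr] at hN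
  nlinarith

/-! ### Non-negative operators -/

/-- A non-negative `A : ℓ₁ⁿ → ℓ_∞ⁿ` of norm at most `1` is a Gram matrix of vectors of norm at
most `1`. -/
lemma exists_gram {A : (PiLp 1 fun _ : Fin n => ℝ) →L[ℝ] (PiLp 1 fun _ : Fin n => ℝ) →L[ℝ] ℝ}
    (hA : IsNonnegMap A) (hA1 : ‖A‖ ≤ 1) :
    ∃ (k : ℕ) (x : Fin n → Fin k → ℝ), (∀ i, ∑ l, x i l ^ 2 ≤ 1) ∧
      ∀ i j, A (basis1 i) (basis1 j) = ∑ l, x i l * x j l := by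
  obtain ⟨k, η, h⟩ := hA
  have hG : ∀ i j, A (basis1 i) (basis1 j) = ∑ l, η l (basis1 i) * η l (basis1 j) := fun i j => by
    simp [h]
  refine ⟨k, fun i l => η l (basis1 i), fun i => ?_, hG⟩
  have h1 := A.le_of_opNorm₂_le_of_le hA1 (norm_basis1 i).le (norm_basis1 i).le
  have h2 := (le_abs_self _).trans h1
  rw [hG] at h2
  simpa [sq] using h2

lemma pairing_swap (N U G : Fin n → Fin n → ℝ) (hG : ∀ i j, G i j = G j i) :
    ∑ i, ∑ j, N i j * ∑ k, U i k * G k j = ∑ i, ∑ j, U i j * ∑ k, N i k * G k j := by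
  refine Finset.sum_congr rfl fun i _ => ?_
  simp only [Finset.mul_sum]
  rw [Finset.sum_comm]
  exact Finset.sum_congr rfl fun j _ => Finset.sum_congr rfl fun k _ => by rw [hG j k]; ring

lemma gram_symm {A : (PiLp 1 fun _ : Fin n => ℝ) →L[ℝ] (PiLp 1 fun _ : Fin n => ℝ) →L[ℝ] ℝ}
    (hA : IsNonnegMap A) (i j : Fin n) :
    A (basis1 i) (basis1 j) = A (basis1 j) (basis1 i) := by
  obtain ⟨k, η, h⟩ := hA
  simp [h, mul_comm]

/-- The pairing `tr(NᵀuA)` is also `tr(uᵀNA)`, so an admissible `u : ℓ_∞ⁿ → ℓ_∞ⁿ` and a norming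
matrix `N` for `uA` exchange their roles. -/
lemma projNorm_top_le_of_one
    {A : (PiLp 1 fun _ : Fin n => ℝ) →L[ℝ] (PiLp 1 fun _ : Fin n => ℝ) →L[ℝ] ℝ}
    (hA : IsNonnegMap A)
    {u : ((PiLp 1 fun _ : Fin n => ℝ) →L[ℝ] ℝ) →L[ℝ] PiLp ⊤ fun _ : Fin n => ℝ} (hu : ‖u‖ ≤ 1)
    {C : ℝ} (h : ∀ v : ((PiLp 1 fun _ : Fin n => ℝ) →L[ℝ] ℝ) →L[ℝ] PiLp 1 fun _ : Fin n => ℝ,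
      ‖v‖ ≤ 1 → projNorm (v.comp A.flip) ≤ C) :
    projNorm (u.comp A.flip) ≤ C := by
  refine projNorm_top_le _ fun N hN => ?_
  refine le_trans (le_of_eq ?_) ((pairing_le_projNorm ((ofEntries 1 N).comp A.flip) (entries u)
    fun η f => ?_).trans (h _ (norm_ofEntries_one_le hN)))
  · simp only [flip_comp_apply, entries_ofEntries]
    exact pairing_swap _ _ _ (gram_symm hA)
  · rw [PiLp.norm_eq_of_L1, Finset.mul_sum]
    refine Finset.sum_le_sum fun i _ => ?_
    calc ∑ j, entries u i j * f i * η (basis1 j) ≤ ∑ j, |entries u i j| * (‖η‖ * ‖f i‖) := by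
          refine Finset.sum_le_sum fun j _ => (le_abs_self _).trans ?_
          rw [abs_mul, abs_mul, Real.norm_eq_abs, mul_assoc, mul_comm ‖η‖]
          gcongr
          exact abs_apply_basis1_le η j
      _ ≤ _ := by
          rw [← Finset.sum_mul]
          exact mul_le_of_le_one_left (by positivity) (row_sum_le_of_norm_le hu i)

lemma exists_top_of_one
    {A : (PiLp 1 fun _ : Fin n => ℝ) →L[ℝ] (PiLp 1 fun _ : Fin n => ℝ) →L[ℝ] ℝ}
    (hA : IsNonnegMap A)
    {u : ((PiLp 1 fun _ : Fin n => ℝ) →L[ℝ] ℝ) →L[ℝ] PiLp 1 fun _ : Fin n => ℝ} (hu : ‖u‖ ≤ 1) :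
    ∃ v : ((PiLp 1 fun _ : Fin n => ℝ) →L[ℝ] ℝ) →L[ℝ] PiLp ⊤ fun _ : Fin n => ℝ,
      ‖v‖ ≤ 1 ∧ projNorm (u.comp A.flip) ≤ projNorm (v.comp A.flip) := by
  obtain ⟨N, hN, hT⟩ := exists_pairing_one (u.comp A.flip)
  refine ⟨ofEntries ⊤ N, norm_ofEntries_top_le hN, hT.trans ?_⟩
  refine le_trans (le_of_eq ?_) (pairing_le_projNorm ((ofEntries ⊤ N).comp A.flip) (entries u)
    fun η f => ?_)
  · simp only [flip_comp_apply, entries_ofEntries]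
    exact pairing_swap _ _ _ (gram_symm hA)
  · refine (le_abs_self _).trans (((signBound_of_norm_le hu).bound (norm_nonneg f) (norm_nonneg η)
      (fun i => PiLp.norm_apply_le f i) (abs_apply_basis1_le η)).trans_eq ?_)
    ring

/-- With `A` the Gram matrix of `x`, the entries of `uA` are `⟨∑ₖ u_ik x_k, x_j⟩`, an inner
product of vectors in the unit ball. -/
lemma projNorm_top_le_of_mem
    {A : (PiLp 1 fun _ : Fin n => ℝ) →L[ℝ] (PiLp 1 fun _ : Fin n => ℝ) →L[ℝ] ℝ}
    (hA : IsNonnegMap A) (hA1 : ‖A‖ ≤ 1)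
    {u : ((PiLp 1 fun _ : Fin n => ℝ) →L[ℝ] ℝ) →L[ℝ] PiLp ⊤ fun _ : Fin n => ℝ} (hu : ‖u‖ ≤ 1)
    {K : ℝ} (hK : K ∈ grothendieckSet) :
    projNorm (u.comp A.flip) ≤ K := by
  obtain ⟨m, x, hx, hG⟩ := exists_gram hA hA1
  refine projNorm_top_le _ fun N hN => ?_
  have hy : ∀ i, ∑ l, (∑ k, entries u i k * x k l) ^ 2 ≤ 1 := by
    intro i
    have h1 : ‖∑ k, entries u i k • (WithLp.toLp 2 (x k) : EuclideanSpace ℝ (Fin m))‖ ≤ 1 := by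
      refine (norm_sum_le _ _).trans (le_trans ?_ (row_sum_le_of_norm_le hu i))
      refine Finset.sum_le_sum fun k _ => ?_
      rw [norm_smul, Real.norm_eq_abs]
      refine mul_le_of_le_one_right (abs_nonneg _) ?_
      rw [← sq_le_one_iff₀ (norm_nonneg _), EuclideanSpace.real_norm_sq_eq]
      exact hx k
    rw [← sq_le_one_iff₀ (norm_nonneg _), EuclideanSpace.real_norm_sq_eq] at h1
    simpa using h1
  have h := hilbertBound_of_mem_grothendieckSet hK hN (Fin m)
    (fun i l => ∑ k, entries u i k * x k l) x hy hx
  refine le_trans (le_of_eq ?_) ((le_abs_self _).trans h)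
  refine Finset.sum_congr rfl fun i _ => Finset.sum_congr rfl fun j _ => ?_
  rw [flip_comp_apply]
  simp only [hG, Finset.mul_sum, Finset.sum_mul]
  rw [Finset.sum_comm]
  exact Finset.sum_congr rfl fun l _ => Finset.sum_congr rfl fun k _ => by ring

lemma KGpos_set_nonempty (p : ENNReal) [Fact (1 ≤ p)] :
    { r : ℝ | ∃ (A : (PiLp 1 fun _ : Fin n => ℝ) →L[ℝ] (PiLp 1 fun _ : Fin n => ℝ) →L[ℝ] ℝ)
      (u : ((PiLp 1 fun _ : Fin n => ℝ) →L[ℝ] ℝ) →L[ℝ] PiLp p fun _ : Fin n => ℝ),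
      IsNonnegMap A ∧ ‖A‖ ≤ 1 ∧ ‖u‖ ≤ 1 ∧ r = projNorm (u.comp A.flip) }.Nonempty :=
  ⟨_, 0, 0, ⟨0, 0, by simp⟩, ContinuousLinearMap.opNorm_zero.trans_le zero_le_one,
    ContinuousLinearMap.opNorm_zero.trans_le zero_le_one, rfl⟩

end Coordinates

/-- `K_G⁺(ℓ₁ⁿ, ℓ₁ⁿ) = K_G⁺(ℓ₁ⁿ, ℓ_∞ⁿ) ≤ K_G`. -/
theorem statement18 (n : ℕ) (hn : 1 ≤ n) :
    KGpos (PiLp 1 fun _ : Fin n => ℝ) (PiLp 1 fun _ : Fin n => ℝ) =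
      KGpos (PiLp 1 fun _ : Fin n => ℝ) (PiLp ⊤ fun _ : Fin n => ℝ) ∧
    KGpos (PiLp 1 fun _ : Fin n => ℝ) (PiLp ⊤ fun _ : Fin n => ℝ) ≤ grothendieckKG := by
  have hbdd : ∀ K ∈ grothendieckSet, KGpos (PiLp 1 fun _ : Fin n => ℝ)
      (PiLp ⊤ fun _ : Fin n => ℝ) ≤ K := fun K hK => by
    refine csSup_le (KGpos_set_nonempty ⊤) ?_
    rintro _ ⟨A, u, hA, hA1, hu, rfl⟩
    exact projNorm_top_le_of_mem hA hA1 hu hK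
  -- Grothendieck's inequality makes both suprema finite, so they are not junk values.
  have htop : ∀ (A : (PiLp 1 fun _ : Fin n => ℝ) →L[ℝ] (PiLp 1 fun _ : Fin n => ℝ) →L[ℝ] ℝ)
      (u : ((PiLp 1 fun _ : Fin n => ℝ) →L[ℝ] ℝ) →L[ℝ] PiLp ⊤ fun _ : Fin n => ℝ),
      IsNonnegMap A → ‖A‖ ≤ 1 → ‖u‖ ≤ 1 → projNorm (u.comp A.flip) ≤
        KGpos (PiLp 1 fun _ : Fin n => ℝ) (PiLp ⊤ fun _ : Fin n => ℝ) := by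
    intro A u hA hA1 hu
    refine le_csSup ⟨8, ?_⟩ ⟨A, u, hA, hA1, hu, rfl⟩
    rintro _ ⟨A, u, hA, hA1, hu, rfl⟩
    exact projNorm_top_le_of_mem hA hA1 hu eight_mem_grothendieckSet
  have hone : ∀ (A : (PiLp 1 fun _ : Fin n => ℝ) →L[ℝ] (PiLp 1 fun _ : Fin n => ℝ) →L[ℝ] ℝ)
      (u : ((PiLp 1 fun _ : Fin n => ℝ) →L[ℝ] ℝ) →L[ℝ] PiLp 1 fun _ : Fin n => ℝ),
      IsNonnegMap A → ‖A‖ ≤ 1 → ‖u‖ ≤ 1 → projNorm (u.comp A.flip) ≤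
        KGpos (PiLp 1 fun _ : Fin n => ℝ) (PiLp ⊤ fun _ : Fin n => ℝ) := by
    intro A u hA hA1 hu
    obtain ⟨v, hv, hle⟩ := exists_top_of_one hA hu
    exact hle.trans (htop A v hA hA1 hv)
  refine ⟨le_antisymm (csSup_le (KGpos_set_nonempty 1) ?_) (csSup_le (KGpos_set_nonempty ⊤) ?_),
    le_csInf ⟨8, eight_mem_grothendieckSet⟩ hbdd⟩
  · rintro _ ⟨A, u, hA, hA1, hu, rfl⟩
    exact hone A u hA hA1 hu
  · rintro _ ⟨A, u, hA, hA1, hu, rfl⟩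
    refine projNorm_top_le_of_one hA hu fun v hv => le_csSup
      ⟨KGpos (PiLp 1 fun _ : Fin n => ℝ) (PiLp ⊤ fun _ : Fin n => ℝ), ?_⟩ ⟨A, v, hA, hA1, hv, rfl⟩
    rintro _ ⟨A, u, hA, hA1, hu, rfl⟩
    exact hone A u hA hA1 hu
end

section
/- Over the field of complex numbers: (i) sup_{m≥1} K_G^+(ℓ_∞^2, ℓ_2^m) = 1 and sup_{m≥1} K_G^+(ℓ_∞^3, ℓ_2^m) = 1; (ii) K_G^+(ℓ_∞^4, ℓ_2^2) > 1. -/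
/-!
Writing `v_i` for the image under `u` of the `i`-th coordinate functional, the projective norm of
`A ⊗ id` applied to `u` is `∑ j, ‖∑ i, a i j • v_i‖`, because `ℓ_1^N ⊗̂ F = ℓ_1^N(F)`
(`projNormC_eq`, `projNormC_comp_flip`). Norming the inner vectors by `t_j` in the unit ball and using
positivity of `A` (`re_sesqForm_le`), this is at most the supremum of `∑ i j, a i j ⟪v_j, v_i⟫` over
families `v` in the unit ball.

For `N ≤ 3` the Gram matrix of such a family may be replaced by a rank one matrix `r r*` with the same
diagonal without decreasing the value (`exists_merge`), which bounds the value by `‖A‖`. It suffices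
to merge two vectors `p, q` into one. Hermitian `2 × 2` matrices have real dimension `4 > N`, so some
nonzero Hermitian combination of `p p*, p q*, q p*, q q*` has zero diagonal; moving from
`p p* + q q*` along it, in the direction in which the form does not decrease, until the coefficient
matrix becomes singular, gives `r r*` with `r` a combination of `p` and `q`.

For `N = 4` take unit vectors `v_i` in `ℂ²` whose projections `v_i v_i*` are linearly independent, and
`a = 100 - k k* - l l*` with `k, l` two independent linear relations between the `v_i`. The value at
`v` is `400`. On the polydisc the quadratic form is strictly below `400`, since equality needs a
unimodular vector orthogonal to both relations, and there is none (`sesqForm_fourMat_lt`). By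
compactness `‖A‖ < 400`, and normalizing gives a constant greater than `1`.
-/

open scoped BigOperators ENNReal ComplexOrder

/-- The projective tensor norm (complex scalars) of the element of `X* ⊗ F` corresponding to
the continuous linear map `u : X → F` (`X` finite dimensional). -/
noncomputable def projNormC {X F : Type*} [NormedAddCommGroup X] [NormedSpace ℂ X]
    [NormedAddCommGroup F] [NormedSpace ℂ F] (u : X →L[ℂ] F) : ℝ :=
  sInf { r : ℝ | ∃ (k : ℕ) (η : Fin k → (X →L[ℂ] ℂ)) (f : Fin k → F),
    (∀ x, u x = ∑ i, η i x • f i) ∧ r = ∑ i, ‖η i‖ * ‖f i‖ }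

/-- The complex Banach space `ℓ_∞^N`. -/
noncomputable abbrev LinfC (N : ℕ) : Type := PiLp ⊤ fun _ : Fin N => ℂ

/-- The matrix of a map `A : ℓ_∞^N → (ℓ_∞^N)*` with respect to the standard basis. -/
noncomputable def matrixOf {N : ℕ} (A : LinfC N →L[ℂ] (LinfC N →L[ℂ] ℂ)) :
    Matrix (Fin N) (Fin N) ℂ :=
  Matrix.of fun i j =>
    A ((WithLp.equiv ⊤ (Fin N → ℂ)).symm (Pi.single i 1))
      ((WithLp.equiv ⊤ (Fin N → ℂ)).symm (Pi.single j 1))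

/-- `A : ℓ_∞^N → ℓ_1^N = (ℓ_∞^N)*` is non-negative iff its matrix is positive semidefinite
(equivalently, `A = B*B` for some `B : ℓ_∞^N → ℓ_2^k`). -/
def IsNonnegMapC {N : ℕ} (A : LinfC N →L[ℂ] (LinfC N →L[ℂ] ℂ)) : Prop :=
  (matrixOf A).PosSemidef

/-- The complex positive Grothendieck constant `K_G⁺(ℓ_∞^N, ℓ_2^m)`:  elements of
`ℓ_∞^N ⊗ ℓ_2^m` are encoded as maps `u : (ℓ_∞^N)* → ℓ_2^m`, and `A ⊗ id` sends `u` to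
`u ∘ Aᵀ`. -/
noncomputable def KGposC (N m : ℕ) : ℝ :=
  sSup { r : ℝ | ∃ (A : LinfC N →L[ℂ] (LinfC N →L[ℂ] ℂ))
      (u : (LinfC N →L[ℂ] ℂ) →L[ℂ] EuclideanSpace ℂ (Fin m)),
    IsNonnegMapC A ∧ ‖A‖ ≤ 1 ∧ ‖u‖ ≤ 1 ∧ r = projNormC (u.comp A.flip) }

/-! ### Merging vectors in dimension less than four -/

open Matrix in
/-- The sesquilinear form `∑ i j, a i j * x i * conj (y j)` of a square matrix `a`, linear in the
first variable and conjugate-linear in the second. -/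
noncomputable def sesqForm {N : ℕ} (a : Matrix (Fin N) (Fin N) ℂ) (x y : Fin N → ℂ) : ℂ :=
  x ⬝ᵥ (a *ᵥ star y)

section Reduction

open Complex Matrix ComplexConjugate

variable {N : ℕ} (a : Matrix (Fin N) (Fin N) ℂ)

lemma sesqForm_add_left (x x' y : Fin N → ℂ) :
    sesqForm a (x + x') y = sesqForm a x y + sesqForm a x' y := by
  simp [sesqForm, add_dotProduct]

lemma sesqForm_add_right (x y y' : Fin N → ℂ) :
    sesqForm a x (y + y') = sesqForm a x y + sesqForm a x y' := by
  simp [sesqForm, mulVec_add, dotProduct_add]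

lemma sesqForm_smul_left (c : ℂ) (x y : Fin N → ℂ) :
    sesqForm a (c • x) y = c * sesqForm a x y := by
  simp [sesqForm, smul_dotProduct]

lemma sesqForm_smul_right (c : ℂ) (x y : Fin N → ℂ) :
    sesqForm a x (c • y) = conj c * sesqForm a x y := by
  simp [sesqForm, mulVec_smul, dotProduct_smul]

lemma sesqForm_zero_left (y : Fin N → ℂ) : sesqForm a 0 y = 0 := by
  simp [sesqForm]

/-- A positive semidefinite Hermitian `2 × 2` matrix of determinant zero has the form `w w*`. -/
lemma exists_rank_one_two_by_two {s t : ℝ} {c : ℂ} (hs : 0 ≤ s) (ht : 0 ≤ t)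
    (h : s * t = normSq c) : ∃ x y : ℂ, normSq x = s ∧ normSq y = t ∧ x * conj y = c := by
  refine ⟨(√s : ℝ), (√t : ℝ) * conj (exp (arg c * I)), ?_, ?_, ?_⟩
  · simp [normSq_ofReal, Real.mul_self_sqrt hs]
  · rw [map_mul, normSq_conj, normSq_ofReal, Real.mul_self_sqrt ht, normSq_eq_norm_sq,
      norm_exp_ofReal_mul_I]
    simp
  · have h1 : √s * √t = ‖c‖ := by
      rw [← Real.sqrt_mul hs, h, normSq_eq_norm_sq, Real.sqrt_sq (norm_nonneg _)]
    rw [map_mul, conj_conj, conj_ofReal, ← mul_assoc, ← ofReal_mul, h1]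
    exact norm_mul_exp_arg_mul_I c

/-- A Hermitian `2 × 2` matrix `[[α, γ], [conj γ, β]]` which is not positive semidefinite can be
added to the identity, with a non-negative coefficient, so as to give a matrix `w w*`. -/
lemma exists_rank_one_identity_add {α β : ℝ} {γ : ℂ}
    (h : α < 0 ∨ β < 0 ∨ α * β < normSq γ) :
    ∃ t : ℝ, 0 ≤ t ∧ ∃ x y : ℂ, normSq x = 1 + t * α ∧ normSq y = 1 + t * β ∧
      x * conj y = t * γ := by
  -- `l` is the smaller eigenvalue of the matrix, and `t = -1 / l`
  set g := normSq γ with hg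
  have hg0 : 0 ≤ g := normSq_nonneg γ
  set d := √((α - β) ^ 2 + 4 * g) with hd
  have hd2 : d ^ 2 = (α - β) ^ 2 + 4 * g := Real.sq_sqrt (by positivity)
  have hd0 : 0 ≤ d := Real.sqrt_nonneg _
  have hab : |α - β| ≤ d := abs_le_of_sq_le_sq (by nlinarith) hd0
  obtain ⟨hab1, hab2⟩ := abs_le.1 hab
  set l := (α + β - d) / 2 with hl
  have hlα : l ≤ α := by linarith
  have hlβ : l ≤ β := by linarith
  have hl2 : (l - α) * (l - β) = g := by
    rw [hl]; nlinarith
  have hl0 : l < 0 := by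
    rcases h with h | h | h
    · linarith
    · linarith
    · by_contra hcon
      nlinarith
  have hlne : l ≠ 0 := hl0.ne
  have e1 : 1 + -1 / l * α = (l - α) / l := by field_simp; ring
  have e2 : 1 + -1 / l * β = (l - β) / l := by field_simp; ring
  have htpos : 0 ≤ -1 / l := div_nonneg_of_nonpos (by norm_num) hl0.le
  refine ⟨-1 / l, htpos, ?_⟩
  rw [e1, e2]
  apply exists_rank_one_two_by_two
  · exact div_nonneg_of_nonpos (by linarith) hl0.le
  · exact div_nonneg_of_nonpos (by linarith) hl0.le
  · rw [div_mul_div_comm, hl2, map_mul, normSq_ofReal, ← hg]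
    field_simp

/-- If `M = [[α, γ], [conj γ, β]]` is positive semidefinite and its quadratic form vanishes at
`(conj p, conj q)`, then `(p, q)` is in the kernel of the transpose of `M`. Only the determinant
condition is needed, as both diagonal entries multiply a vanishing quantity. -/
lemma comb_eq_zero_of_psd {α β : ℝ} {γ : ℂ} (hdet : normSq γ ≤ α * β) (p q : ℂ)
    (h : α * normSq p + β * normSq q + 2 * (γ * p * conj q).re = 0) :
    (α : ℂ) * p + conj γ * q = 0 ∧ γ * p + β * q = 0 := by
  have e1 : normSq ((α : ℂ) * p + conj γ * q) = α * (α * normSq p + β * normSq q +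
      2 * (γ * p * conj q).re) - (α * β - normSq γ) * normSq q := by
    simp [normSq_apply]; ring
  have e2 : normSq (γ * p + β * q) = β * (α * normSq p + β * normSq q +
      2 * (γ * p * conj q).re) - (α * β - normSq γ) * normSq p := by
    simp [normSq_apply]; ring
  rw [h] at e1 e2
  have hp := mul_nonneg (sub_nonneg.2 hdet) (normSq_nonneg p)
  have hq := mul_nonneg (sub_nonneg.2 hdet) (normSq_nonneg q)
  constructor
  · exact normSq_eq_zero.1 (le_antisymm (by linarith) (normSq_nonneg _))
  · exact normSq_eq_zero.1 (le_antisymm (by linarith) (normSq_nonneg _))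

/-- For `N < 4` there is a Hermitian direction in the span of `p p*, p q*, q p*, q q*` which does
not change the diagonal, does not decrease the form, and whose coefficient matrix is not positive
semidefinite. Existence is a dimension count: Hermitian `2 × 2` matrices form a real space of
dimension four, and there are `N` real linear conditions. -/
lemma exists_direction (hN : N < 4) (p q : Fin N → ℂ) :
    ∃ (α β : ℝ) (γ : ℂ),
      (∀ i, α * normSq (p i) + β * normSq (q i) + 2 * (γ * p i * conj (q i)).re = 0) ∧
      0 ≤ α * (sesqForm a p p).re + β * (sesqForm a q q).re +
        (γ * sesqForm a p q + conj γ * sesqForm a q p).re ∧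
      (α < 0 ∨ β < 0 ∨ α * β < normSq γ) := by
  let L : (ℝ × ℝ × ℂ) →ₗ[ℝ] (Fin N → ℝ) :=
    { toFun := fun m i =>
        m.1 * normSq (p i) + m.2.1 * normSq (q i) + 2 * (m.2.2 * p i * conj (q i)).re
      map_add' := by
        intro m m'; ext i; simp; ring
      map_smul' := by
        intro c m; ext i; simp; ring }
  have hker : L.ker ≠ ⊥ := by
    apply LinearMap.ker_ne_bot_of_finrank_lt
    simp [Complex.finrank_real_complex]
    omega
  obtain ⟨⟨α, β, γ⟩, hm, hne⟩ := (Submodule.ne_bot_iff _).1 hker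
  have hdiag : ∀ i, α * normSq (p i) + β * normSq (q i) + 2 * (γ * p i * conj (q i)).re = 0 :=
    fun i => congrFun (LinearMap.mem_ker.1 hm) i
  -- in the semidefinite case the whole combination vanishes, and with it the form
  have psd : ∀ (α β : ℝ) (γ : ℂ),
      (∀ i, α * normSq (p i) + β * normSq (q i) + 2 * (γ * p i * conj (q i)).re = 0) →
      ¬ (α < 0 ∨ β < 0 ∨ α * β < normSq γ) →
      α * (sesqForm a p p).re + β * (sesqForm a q q).re +
        (γ * sesqForm a p q + conj γ * sesqForm a q p).re = 0 := by
    intro α β γ hd hn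
    push Not at hn
    have e1 : (α : ℂ) • p + conj γ • q = 0 := by
      ext i; simpa using (comb_eq_zero_of_psd hn.2.2 _ _ (hd i)).1
    have e2 : γ • p + (β : ℂ) • q = 0 := by
      ext i; simpa using (comb_eq_zero_of_psd hn.2.2 _ _ (hd i)).2
    have f1 := congrArg (fun z => (sesqForm a z p).re) e1
    have f2 := congrArg (fun z => (sesqForm a z q).re) e2
    simp only [sesqForm_add_left, sesqForm_smul_left, sesqForm_zero_left, add_re,
      re_ofReal_mul, zero_re] at f1 f2 ⊢
    linarith
  have hdiag' : ∀ i, (-α) * normSq (p i) + (-β) * normSq (q i) +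
      2 * ((-γ) * p i * conj (q i)).re = 0 := by
    intro i
    have := hdiag i
    simp only [neg_mul, neg_re]
    linarith
  have hneg : (-α) * (sesqForm a p p).re + (-β) * (sesqForm a q q).re +
        ((-γ) * sesqForm a p q + conj (-γ) * sesqForm a q p).re =
      -(α * (sesqForm a p p).re + β * (sesqForm a q q).re +
        (γ * sesqForm a p q + conj γ * sesqForm a q p).re) := by
    simp only [map_neg, neg_mul, add_re, neg_re]; ring
  -- one of the two directions `(α, β, γ)` and `(-α, -β, -γ)` is as required
  by_cases hc : α < 0 ∨ β < 0 ∨ α * β < normSq γ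
  · by_cases hf : 0 ≤ α * (sesqForm a p p).re + β * (sesqForm a q q).re +
        (γ * sesqForm a p q + conj γ * sesqForm a q p).re
    · exact ⟨α, β, γ, hdiag, hf, hc⟩
    · refine ⟨-α, -β, -γ, hdiag', by rw [hneg]; linarith, ?_⟩
      by_contra hc'
      have := psd _ _ _ hdiag' hc'
      rw [hneg] at this
      linarith
  · refine ⟨-α, -β, -γ, hdiag', by rw [hneg, psd α β γ hdiag hc, neg_zero], ?_⟩
    by_contra hc'
    push Not at hc hc'
    obtain rfl : α = 0 := by linarith [hc.1, hc'.1]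
    obtain rfl : β = 0 := by linarith [hc.2.1, hc'.2.1]
    have hγ : γ = 0 := normSq_eq_zero.1 (le_antisymm (by simpa using hc.2.2) (normSq_nonneg _))
    exact hne (by simp [hγ])

/-- For `N < 4`, two vectors can be replaced by one, keeping the diagonal of `p p* + q q*` and not
decreasing the quadratic form. -/
lemma exists_merge_two (hN : N < 4) (p q : Fin N → ℂ) :
    ∃ r : Fin N → ℂ, (∀ i, normSq (r i) = normSq (p i) + normSq (q i)) ∧
      (sesqForm a p p).re + (sesqForm a q q).re ≤ (sesqForm a r r).re := by
  obtain ⟨α, β, γ, hdiag, hf, hneg⟩ := exists_direction a hN p q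
  obtain ⟨t, ht, x, y, hx, hy, hxy⟩ := exists_rank_one_identity_add hneg
  have hyx : y * conj x = t * conj γ := by
    have := congrArg conj hxy
    simpa [mul_comm] using this
  refine ⟨x • p + y • q, fun i => ?_, ?_⟩
  · have e : normSq ((x • p + y • q) i) = normSq x * normSq (p i) + normSq y * normSq (q i) +
        2 * ((x * conj y) * p i * conj (q i)).re := by
      simp [normSq_apply]; ring
    have := hdiag i
    have e' : (t * γ * p i * conj (q i)).re = t * (γ * p i * conj (q i)).re := by
      rw [mul_assoc, mul_assoc, re_ofReal_mul, ← mul_assoc]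
    rw [e, hx, hy, hxy, e']
    linear_combination t * this
  · have e : sesqForm a (x • p + y • q) (x • p + y • q) =
        (normSq x : ℂ) * sesqForm a p p + (normSq y : ℂ) * sesqForm a q q +
        ((x * conj y) * sesqForm a p q + (y * conj x) * sesqForm a q p) := by
      simp only [sesqForm_add_left, sesqForm_add_right, sesqForm_smul_left, sesqForm_smul_right,
        ← mul_conj]
      ring
    rw [e, hx, hy, hxy, hyx]
    have := mul_nonneg ht hf
    simp only [add_re, re_ofReal_mul, mul_assoc] at this ⊢
    linarith

/-- For `N < 4`, finitely many vectors can be replaced by one: a correlation matrix of size at most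
three is dominated, for any given form, by one of rank one with the same diagonal. -/
lemma exists_merge (hN : N < 4) {κ : Type*} (s : Finset κ) (b : κ → Fin N → ℂ) :
    ∃ r : Fin N → ℂ, (∀ i, normSq (r i) = ∑ k ∈ s, normSq (b k i)) ∧
      ∑ k ∈ s, (sesqForm a (b k) (b k)).re ≤ (sesqForm a r r).re := by
  classical
  induction s using Finset.induction_on with
  | empty => exact ⟨0, by simp, by simp [sesqForm_zero_left]⟩
  | insert k s hk ih =>
    obtain ⟨r, hr, hr'⟩ := ih
    obtain ⟨r', h1, h2⟩ := exists_merge_two a hN (b k) r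
    refine ⟨r', fun i => ?_, ?_⟩
    · rw [Finset.sum_insert hk, h1, hr]
    · rw [Finset.sum_insert hk]
      linarith

/-- A positive semidefinite form satisfies the arithmetic-geometric mean version of the
Cauchy-Schwarz inequality. -/
lemma re_sesqForm_le {a : Matrix (Fin N) (Fin N) ℂ} (ha : a.PosSemidef) (x y : Fin N → ℂ) :
    (sesqForm a x y).re ≤ ((sesqForm a x x).re + (sesqForm a y y).re) / 2 := by
  have h0 := ha.re_dotProduct_nonneg (star (x + (-1 : ℂ) • y))
  rw [star_star] at h0
  change 0 ≤ (sesqForm a (x + (-1 : ℂ) • y) (x + (-1 : ℂ) • y)).re at h0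
  have hsymm : sesqForm a y x = conj (sesqForm a x y) := by
    simp only [sesqForm, dotProduct, mulVec, map_sum, map_mul, Finset.mul_sum, Pi.star_apply]
    rw [Finset.sum_comm]
    refine Finset.sum_congr rfl fun i _ => Finset.sum_congr rfl fun j _ => ?_
    have := ha.isHermitian.apply j i
    rw [starRingEnd_apply, starRingEnd_apply, starRingEnd_apply, star_star, this]
    ring
  simp only [sesqForm_add_left, sesqForm_add_right, sesqForm_smul_left, sesqForm_smul_right,
    hsymm] at h0
  simp at h0
  linarith

end Reduction

/-! ### The projective norm on `ℓ_1^N(F)` -/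

section SupNorm

open Complex Matrix ComplexConjugate

/-- The standard basis vectors of `ℓ_∞^N`. -/
noncomputable def basisVec {N : ℕ} (j : Fin N) : LinfC N := WithLp.toLp ⊤ (Pi.single j 1)

lemma basisVec_apply {N : ℕ} (i j : Fin N) :
    (basisVec j : LinfC N) i = if i = j then 1 else 0 := by
  simp [basisVec]

lemma sum_smul_basisVec {N : ℕ} (x : LinfC N) : ∑ j, x j • basisVec j = x := by
  ext i
  simp [basisVec_apply]

lemma linfC_norm_le {N : ℕ} {x : LinfC N} {c : ℝ} (hc : 0 ≤ c) (h : ∀ i, ‖x i‖ ≤ c) : ‖x‖ ≤ c := by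
  rw [PiLp.norm_eq_ciSup]
  exact Real.iSup_le h hc

/-- The dual norm of `ℓ_∞^N` dominates the `ℓ_1` norm. -/
lemma sum_norm_basisVec_le {N : ℕ} (φ : LinfC N →L[ℂ] ℂ) : ∑ j, ‖φ (basisVec j)‖ ≤ ‖φ‖ := by
  set x : LinfC N := WithLp.toLp ⊤ fun j => conj (exp (arg (φ (basisVec j)) * I)) with hx
  have hx1 : ‖x‖ ≤ 1 := linfC_norm_le zero_le_one fun i => by
    simp [hx, norm_exp_ofReal_mul_I]
  have h : φ x = ((∑ j, ‖φ (basisVec j)‖ : ℝ) : ℂ) := by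
    conv_lhs => rw [← sum_smul_basisVec x]
    rw [map_sum, ofReal_sum]
    refine Finset.sum_congr rfl fun j _ => ?_
    rw [map_smul, smul_eq_mul]
    change conj (exp (arg (φ (basisVec j)) * I)) * _ = _
    set θ := arg (φ (basisVec j)) with hθ
    conv_lhs => rw [← norm_mul_exp_arg_mul_I (φ (basisVec j)), ← hθ]
    rw [mul_left_comm, mul_comm (conj _), mul_conj, normSq_eq_norm_sq, norm_exp_ofReal_mul_I]
    simp
  have h2 := φ.le_opNorm x
  rw [h, norm_real, Real.norm_of_nonneg (Finset.sum_nonneg fun _ _ => norm_nonneg _)] at h2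
  exact h2.trans (mul_le_of_le_one_right (norm_nonneg _) hx1)

lemma norm_proj_le {N : ℕ} (i : Fin N) : ‖PiLp.proj (𝕜 := ℂ) ⊤ (fun _ : Fin N => ℂ) i‖ ≤ 1 :=
  ContinuousLinearMap.opNorm_le_bound _ zero_le_one fun x => by
    simpa using PiLp.norm_apply_le x i

lemma sum_smul_proj {N : ℕ} (φ : LinfC N →L[ℂ] ℂ) :
    ∑ i, φ (basisVec i) • PiLp.proj (𝕜 := ℂ) ⊤ (fun _ : Fin N => ℂ) i = φ := by
  ext x
  conv_rhs => rw [← sum_smul_basisVec x]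
  simp [mul_comm]

/-- The projective norm on `(ℓ_∞^N)* ⊗ F = ℓ_1^N ⊗ F` is the norm of `ℓ_1^N(F)`. -/
lemma projNormC_eq {N : ℕ} {F : Type*} [NormedAddCommGroup F] [NormedSpace ℂ F]
    (u : LinfC N →L[ℂ] F) : projNormC u = ∑ j, ‖u (basisVec j)‖ := by
  have hmem : ∃ (k : ℕ) (η : Fin k → (LinfC N →L[ℂ] ℂ)) (f : Fin k → F),
      (∀ x, u x = ∑ i, η i x • f i) ∧ (∑ j, ‖PiLp.proj (𝕜 := ℂ) ⊤ (fun _ : Fin N => ℂ) j‖ *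
        ‖u (basisVec j)‖) = ∑ i, ‖η i‖ * ‖f i‖ := by
    refine ⟨N, fun j => PiLp.proj (𝕜 := ℂ) ⊤ (fun _ : Fin N => ℂ) j, fun j => u (basisVec j),
      fun x => ?_, rfl⟩
    conv_lhs => rw [← sum_smul_basisVec x]
    simp
  apply le_antisymm
  · unfold projNormC
    refine (csInf_le (s := { r : ℝ | ∃ (k : ℕ) (η : Fin k → (LinfC N →L[ℂ] ℂ)) (f : Fin k → F),
      (∀ x, u x = ∑ i, η i x • f i) ∧ r = ∑ i, ‖η i‖ * ‖f i‖ }) ⟨0, ?_⟩ hmem).trans ?_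
    · rintro r ⟨k, η, f, -, rfl⟩
      positivity
    · exact Finset.sum_le_sum fun j _ =>
        mul_le_of_le_one_left (norm_nonneg _) (norm_proj_le j)
  · refine le_csInf ⟨_, hmem⟩ ?_
    rintro r ⟨k, η, f, hu, rfl⟩
    calc ∑ j, ‖u (basisVec j)‖ ≤ ∑ j, ∑ i, ‖η i (basisVec j)‖ * ‖f i‖ := by
          refine Finset.sum_le_sum fun j _ => ?_
          rw [hu]
          exact (norm_sum_le _ _).trans (by simp [norm_smul])
      _ = ∑ i, (∑ j, ‖η i (basisVec j)‖) * ‖f i‖ := by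
          rw [Finset.sum_comm]
          simp [Finset.sum_mul]
      _ ≤ _ := Finset.sum_le_sum fun i _ =>
          mul_le_mul_of_nonneg_right (sum_norm_basisVec_le _) (norm_nonneg _)

lemma apply_eq_sesqForm {N : ℕ} (A : LinfC N →L[ℂ] (LinfC N →L[ℂ] ℂ)) (x y : LinfC N) :
    A x y = sesqForm (matrixOf A) x (star y.ofLp) := by
  conv_lhs => rw [← sum_smul_basisVec x, ← sum_smul_basisVec y]
  simp only [sesqForm, dotProduct, mulVec, star_star, map_sum, map_smul,
    _root_.sum_apply, _root_.smul_apply, smul_eq_mul, Finset.mul_sum]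
  rw [Finset.sum_comm]
  refine Finset.sum_congr rfl fun i _ => Finset.sum_congr rfl fun j _ => ?_
  change _ = x i * (A (basisVec i) (basisVec j) * y j)
  ring

/-- The map `ℓ_∞^N → (ℓ_∞^N)*` with a given matrix. -/
noncomputable def mapOfMatrix {N : ℕ} (a : Matrix (Fin N) (Fin N) ℂ) :
    LinfC N →L[ℂ] (LinfC N →L[ℂ] ℂ) :=
  ∑ i, ∑ j, a i j • (PiLp.proj (𝕜 := ℂ) ⊤ (fun _ : Fin N => ℂ) i).smulRight
    (PiLp.proj (𝕜 := ℂ) ⊤ (fun _ : Fin N => ℂ) j)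

lemma mapOfMatrix_apply {N : ℕ} (a : Matrix (Fin N) (Fin N) ℂ) (x y : LinfC N) :
    mapOfMatrix a x y = ∑ i, ∑ j, a i j * (x i * y j) := by
  simp [mapOfMatrix]

lemma matrixOf_mapOfMatrix {N : ℕ} (a : Matrix (Fin N) (Fin N) ℂ) :
    matrixOf (mapOfMatrix a) = a := by
  ext i j
  change mapOfMatrix a (basisVec i) (basisVec j) = a i j
  simp [mapOfMatrix_apply, basisVec_apply]

/-- The map `(ℓ_∞^N)* → F` sending the coordinate functionals to given vectors. -/
noncomputable def mapOfVectors {N m : ℕ} (v : Fin N → EuclideanSpace ℂ (Fin m)) :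
    (LinfC N →L[ℂ] ℂ) →L[ℂ] EuclideanSpace ℂ (Fin m) :=
  ∑ i, (ContinuousLinearMap.apply ℂ ℂ (basisVec i : LinfC N)).smulRight (v i)

lemma mapOfVectors_apply {N m : ℕ} (v : Fin N → EuclideanSpace ℂ (Fin m)) (φ : LinfC N →L[ℂ] ℂ) :
    mapOfVectors v φ = ∑ i, φ (basisVec i) • v i := by
  simp [mapOfVectors]

lemma norm_mapOfVectors_le {N m : ℕ} {v : Fin N → EuclideanSpace ℂ (Fin m)}
    (hv : ∀ i, ‖v i‖ ≤ 1) : ‖mapOfVectors v‖ ≤ 1 := by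
  refine ContinuousLinearMap.opNorm_le_bound _ zero_le_one fun φ => ?_
  rw [mapOfVectors_apply, one_mul]
  refine (norm_sum_le _ _).trans (le_trans ?_ (sum_norm_basisVec_le φ))
  refine Finset.sum_le_sum fun i _ => ?_
  rw [norm_smul]
  exact mul_le_of_le_one_right (norm_nonneg _) (hv i)

/-- The projective norm of `A ⊗ id` applied to the tensor `∑ e_i ⊗ v_i`. -/
lemma projNormC_comp_flip {N m : ℕ} (A : LinfC N →L[ℂ] (LinfC N →L[ℂ] ℂ))
    (u : (LinfC N →L[ℂ] ℂ) →L[ℂ] EuclideanSpace ℂ (Fin m)) :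
    projNormC (u.comp A.flip) = ∑ j, ‖∑ i, matrixOf A i j •
      u (PiLp.proj (𝕜 := ℂ) ⊤ (fun _ : Fin N => ℂ) i)‖ := by
  rw [projNormC_eq]
  refine Finset.sum_congr rfl fun j _ => ?_
  congr 1
  change u (A.flip (basisVec j)) = _
  conv_lhs => rw [← sum_smul_proj (A.flip (basisVec j))]
  rw [map_sum]
  exact Finset.sum_congr rfl fun i _ => map_smul _ _ _

lemma mapOfVectors_proj {N m : ℕ} (v : Fin N → EuclideanSpace ℂ (Fin m)) (i : Fin N) :
    mapOfVectors v (PiLp.proj (𝕜 := ℂ) ⊤ (fun _ : Fin N => ℂ) i) = v i := by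
  simp [mapOfVectors_apply, basisVec_apply]

end SupNorm

/-! ### The constant for `N < 4` -/

section UpperBound

open Complex Matrix ComplexConjugate

lemma re_sesqForm_matrixOf_le_norm {N : ℕ} (A : LinfC N →L[ℂ] (LinfC N →L[ℂ] ℂ)) {z : Fin N → ℂ}
    (hz : ∀ i, ‖z i‖ ≤ 1) : (sesqForm (matrixOf A) z z).re ≤ ‖A‖ := by
  have h := apply_eq_sesqForm A (WithLp.toLp ⊤ z) (WithLp.toLp ⊤ (star z))
  simp only [star_star] at h
  rw [← h]
  have h1 : ‖(WithLp.toLp ⊤ z : LinfC N)‖ ≤ 1 := linfC_norm_le zero_le_one hz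
  have h2 : ‖(WithLp.toLp ⊤ (star z) : LinfC N)‖ ≤ 1 :=
    linfC_norm_le zero_le_one fun i => by simpa using hz i
  refine (re_le_norm _).trans ((A.le_opNorm₂ _ _).trans ?_)
  rw [mul_assoc]
  exact mul_le_of_le_one_right (norm_nonneg A) (mul_le_one₀ h1 (norm_nonneg _) h2)

/-- For `N < 4` the quadratic form of `A`, evaluated at vectors of the Hilbert space unit ball, is
at most `‖A‖`. -/
lemma sum_re_sesqForm_le_norm {N m : ℕ} (hN : N < 4) (A : LinfC N →L[ℂ] (LinfC N →L[ℂ] ℂ))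
    {v : Fin N → EuclideanSpace ℂ (Fin m)} (hv : ∀ i, ‖v i‖ ≤ 1) :
    ∑ k, (sesqForm (matrixOf A) (fun i => v i k) (fun i => v i k)).re ≤ ‖A‖ := by
  obtain ⟨r, hr, hle⟩ := exists_merge (matrixOf A) hN Finset.univ (fun k i => v i k)
  refine hle.trans (re_sesqForm_matrixOf_le_norm A fun i => ?_)
  have h1 : ‖r i‖ ^ 2 = ‖v i‖ ^ 2 := by
    rw [EuclideanSpace.norm_sq_eq, ← normSq_eq_norm_sq, hr]
    simp [normSq_eq_norm_sq]
  rw [(sq_eq_sq₀ (norm_nonneg _) (norm_nonneg _)).1 h1]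
  exact hv i

lemma projNormC_le_one {N m : ℕ} (hN : N < 4) (A : LinfC N →L[ℂ] (LinfC N →L[ℂ] ℂ))
    (u : (LinfC N →L[ℂ] ℂ) →L[ℂ] EuclideanSpace ℂ (Fin m)) (hA : IsNonnegMapC A) (hA1 : ‖A‖ ≤ 1)
    (hu : ‖u‖ ≤ 1) : projNormC (u.comp A.flip) ≤ 1 := by
  rw [projNormC_comp_flip]
  set v : Fin N → EuclideanSpace ℂ (Fin m) :=
    fun i => u (PiLp.proj (𝕜 := ℂ) ⊤ (fun _ : Fin N => ℂ) i) with hv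
  have hv1 : ∀ i, ‖v i‖ ≤ 1 := fun i =>
    (u.le_opNorm _).trans (mul_le_one₀ hu (norm_nonneg _) (norm_proj_le i))
  set w : Fin N → EuclideanSpace ℂ (Fin m) := fun j => ∑ i, matrixOf A i j • v i with hw
  -- the vectors norming the `w j`; zero if `w j = 0`
  set t : Fin N → EuclideanSpace ℂ (Fin m) := fun j => ((‖w j‖⁻¹ : ℝ) : ℂ) • w j with ht
  have ht1 : ∀ j, ‖t j‖ ≤ 1 := fun j => by
    rw [ht, norm_smul, norm_real, norm_inv, norm_norm]
    exact inv_mul_le_one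
  have hnorm : ∀ j, ‖w j‖ = ∑ k, (w j k * conj (t j k)).re := by
    intro j
    have h1 : ∀ k, (w j k * conj (t j k)).re = ‖w j‖⁻¹ * ‖w j k‖ ^ 2 := by
      intro k
      rw [ht]
      simp only [PiLp.smul_apply, smul_eq_mul, map_mul, conj_ofReal]
      rw [mul_left_comm, re_ofReal_mul, mul_conj, ofReal_re, normSq_eq_norm_sq]
    simp_rw [h1]
    rw [← Finset.mul_sum, ← EuclideanSpace.norm_sq_eq]
    by_cases h0 : ‖w j‖ = 0
    · simp [h0]
    · field_simp
  have hsum : ∑ j, ‖w j‖ =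
      ∑ k, (sesqForm (matrixOf A) (fun i => v i k) (fun i => t i k)).re := by
    simp_rw [hnorm]
    rw [Finset.sum_comm]
    refine Finset.sum_congr rfl fun k _ => ?_
    rw [← re_sum]
    congr 1
    simp only [hw, sesqForm, dotProduct, mulVec, Finset.mul_sum, Pi.star_apply]
    rw [Finset.sum_comm]
    refine Finset.sum_congr rfl fun j _ => ?_
    simp only [WithLp.ofLp_sum, WithLp.ofLp_smul, Finset.sum_apply, Pi.smul_apply, smul_eq_mul,
      Finset.sum_mul]
    exact Finset.sum_congr rfl fun i _ => by rw [starRingEnd_apply]; ring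
  change ∑ j, ‖w j‖ ≤ 1
  rw [hsum]
  calc _ ≤ ∑ k, ((sesqForm (matrixOf A) (fun i => v i k) (fun i => v i k)).re +
        (sesqForm (matrixOf A) (fun i => t i k) (fun i => t i k)).re) / 2 :=
        Finset.sum_le_sum fun k _ => re_sesqForm_le hA _ _
    _ ≤ 1 := by
        rw [← Finset.sum_div, Finset.sum_add_distrib]
        linarith [sum_re_sesqForm_le_norm hN A hv1, sum_re_sesqForm_le_norm hN A ht1]

/-- The set defining `KGposC N m` is bounded, by the trivial bound `N`. -/
lemma bddAbove_KGposC (N m : ℕ) : BddAbove { r : ℝ | ∃ (A : LinfC N →L[ℂ] (LinfC N →L[ℂ] ℂ))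
      (u : (LinfC N →L[ℂ] ℂ) →L[ℂ] EuclideanSpace ℂ (Fin m)),
    IsNonnegMapC A ∧ ‖A‖ ≤ 1 ∧ ‖u‖ ≤ 1 ∧ r = projNormC (u.comp A.flip) } := by
  refine ⟨N, ?_⟩
  rintro r ⟨A, u, -, hA, hu, rfl⟩
  rw [projNormC_eq]
  refine (Finset.sum_le_card_nsmul _ _ 1 fun j _ => ?_).trans (by simp)
  have h1 : ‖(basisVec j : LinfC N)‖ ≤ 1 := linfC_norm_le zero_le_one fun i => by
    rw [basisVec_apply]; split_ifs <;> simp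
  have h2 : ‖A.flip (basisVec j)‖ ≤ 1 := by
    refine (A.flip.le_opNorm _).trans (mul_le_one₀ ?_ (norm_nonneg _) h1)
    rwa [ContinuousLinearMap.opNorm_flip]
  exact (u.le_opNorm _).trans (mul_le_one₀ hu (norm_nonneg _) h2)

/-- Any admissible matrix `a` and any vectors `v i` of the unit ball give a lower bound for the
constant: the tensor `∑ e_i ⊗ v_i` is sent to one of projective norm `∑ j, ‖∑ i, a i j • v i‖`. -/
lemma sum_norm_le_KGposC {N m : ℕ} {a : Matrix (Fin N) (Fin N) ℂ} (ha : a.PosSemidef)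
    (hnorm : ‖mapOfMatrix a‖ ≤ 1) {v : Fin N → EuclideanSpace ℂ (Fin m)} (hv : ∀ i, ‖v i‖ ≤ 1) :
    ∑ j, ‖∑ i, a i j • v i‖ ≤ KGposC N m := by
  refine le_csSup (bddAbove_KGposC N m) ⟨mapOfMatrix a, mapOfVectors v, ?_, hnorm,
    norm_mapOfVectors_le hv, ?_⟩
  · rwa [IsNonnegMapC, matrixOf_mapOfMatrix]
  · rw [projNormC_comp_flip, matrixOf_mapOfMatrix]
    simp_rw [mapOfVectors_proj]

lemma KGposC_eq_one {n m : ℕ} (hn : n + 1 < 4) (hm : 1 ≤ m) : KGposC (n + 1) m = 1 := by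
  have hge : 1 ≤ KGposC (n + 1) m := by
    -- a rank one matrix unit together with a constant family of unit vectors
    let a : Matrix (Fin (n + 1)) (Fin (n + 1)) ℂ := diagonal (Pi.single 0 1)
    have ha : a.PosSemidef := PosSemidef.diagonal (by
      intro i; by_cases h : i = 0 <;> simp [h])
    have hnorm : ‖mapOfMatrix a‖ ≤ 1 := by
      refine ContinuousLinearMap.opNorm_le_bound₂ _ zero_le_one fun x y => ?_
      have : mapOfMatrix a x y = x 0 * y 0 := by
        simp [mapOfMatrix_apply, a, diagonal_apply, Pi.single_apply]
      rw [this, norm_mul, one_mul]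
      exact mul_le_mul (PiLp.norm_apply_le x 0) (PiLp.norm_apply_le y 0) (norm_nonneg _)
        (norm_nonneg _)
    have h := sum_norm_le_KGposC (m := m) ha hnorm
      (v := fun _ => EuclideanSpace.single ⟨0, hm⟩ 1) (by simp)
    refine le_trans (le_of_eq ?_) h
    rw [Finset.sum_eq_single 0]
    · simp [a, diagonal_apply]
    · intro j _ hj
      simp [a, diagonal_apply, hj, Pi.single_apply]
    · simp
  refine le_antisymm ?_ hge
  have hA0 : ‖(0 : LinfC (n + 1) →L[ℂ] (LinfC (n + 1) →L[ℂ] ℂ))‖ ≤ 1 :=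
    ContinuousLinearMap.opNorm_le_bound _ zero_le_one fun x => by simp
  have hu0 : ‖(0 : (LinfC (n + 1) →L[ℂ] ℂ) →L[ℂ] EuclideanSpace ℂ (Fin m))‖ ≤ 1 :=
    ContinuousLinearMap.opNorm_le_bound _ zero_le_one fun x => by simp
  refine csSup_le ⟨_, 0, 0, ?_, hA0, hu0, rfl⟩ ?_
  · have : matrixOf (0 : LinfC (n + 1) →L[ℂ] (LinfC (n + 1) →L[ℂ] ℂ)) = 0 := by
      ext i j; simp [matrixOf]
    rw [IsNonnegMapC, this]
    exact PosSemidef.zero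
  · rintro r ⟨A, u, hA, hA1, hu, rfl⟩
    exact projNormC_le_one hn A u hA hA1 hu

lemma sSup_KGposC_eq_one {n : ℕ} (hn : n + 1 < 4) :
    sSup { r : ℝ | ∃ m : ℕ, 1 ≤ m ∧ r = KGposC (n + 1) m } = 1 := by
  have : { r : ℝ | ∃ m : ℕ, 1 ≤ m ∧ r = KGposC (n + 1) m } = {1} := by
    ext r
    simp only [Set.mem_ofPred_eq, Set.mem_singleton_iff]
    constructor
    · rintro ⟨m, hm, rfl⟩
      exact KGposC_eq_one hn hm
    · rintro rfl
      exact ⟨1, le_rfl, (KGposC_eq_one hn le_rfl).symm⟩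
  rw [this, csSup_singleton]

end UpperBound

/-! ### The constant for `N = 4` -/

section Four

open Complex Matrix ComplexConjugate

/-- The linear relation `-3 v₀ - 4 v₁ + 5 v₂ = 0` between the vectors `fourVec`. -/
noncomputable def relOne : Fin 4 → ℂ := ![-3, -4, 5, 0]

/-- The linear relation `-3 v₀ - 4 i v₁ + 5 v₃ = 0` between the vectors `fourVec`. -/
noncomputable def relTwo : Fin 4 → ℂ := ![-3, -4 * I, 0, 5]

/-- Four unit vectors of `ℂ²` whose rank one projections are linearly independent. -/
noncomputable def fourVec : Fin 4 → EuclideanSpace ℂ (Fin 2) :=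
  ![!₂[1, 0], !₂[0, 1], !₂[3 / 5, 4 / 5], !₂[3 / 5, 4 / 5 * I]]

/-- The matrix `100 - k k* - l l*`, where `k`, `l` are the relations between the `fourVec i`. -/
noncomputable def fourMat : Matrix (Fin 4) (Fin 4) ℂ :=
  (100 : ℂ) • 1 - vecMulVec relOne (star relOne) - vecMulVec relTwo (star relTwo)

lemma norm_fourVec (i : Fin 4) : ‖fourVec i‖ = 1 := by
  rw [← sq_eq_sq₀ (norm_nonneg _) zero_le_one, EuclideanSpace.norm_sq_eq]
  fin_cases i <;> simp [fourVec] <;> norm_num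

lemma sum_fourMat_smul (j : Fin 4) : ∑ i, fourMat i j • fourVec i = (100 : ℂ) • fourVec j := by
  have h1 : ∑ i, relOne i • fourVec i = 0 := by
    ext k
    fin_cases k <;> simp [Fin.sum_univ_four, relOne, fourVec] <;> ring
  have h2 : ∑ i, relTwo i • fourVec i = 0 := by
    ext k
    fin_cases k <;> simp [Fin.sum_univ_four, relTwo, fourVec] <;> ring
  have e : ∀ i, fourMat i j • fourVec i = 
      ((100 : ℂ) * (1 : Matrix (Fin 4) (Fin 4) ℂ) i j) • fourVec i -
      conj (relOne j) • (relOne i • fourVec i) - conj (relTwo j) • (relTwo i • fourVec i) := by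
    intro i
    simp only [fourMat, Matrix.sub_apply, Matrix.smul_apply, vecMulVec_apply, Pi.star_apply, sub_smul, smul_smul,
      smul_eq_mul, starRingEnd_apply, mul_comm]
  simp_rw [e]
  rw [Finset.sum_sub_distrib, Finset.sum_sub_distrib, ← Finset.smul_sum, ← Finset.smul_sum, h1, h2]
  simp [one_apply]

lemma sesqForm_fourMat (x : Fin 4 → ℂ) : (sesqForm fourMat x x).re =
    100 * (normSq (x 0) + normSq (x 1) + normSq (x 2) + normSq (x 3)) -
      normSq (5 * x 2 - (3 * x 0 + 4 * x 1)) - normSq (5 * x 3 - (3 * x 0 + 4 * (I * x 1))) := by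
  have h : ∀ l : Fin 4 → ℂ, sesqForm (vecMulVec l (star l)) x x = normSq (l ⬝ᵥ x) := by
    intro l
    rw [← mul_conj]
    simp only [sesqForm, dotProduct, mulVec, vecMulVec_apply, map_sum, map_mul, Finset.mul_sum,
      Finset.sum_mul, Pi.star_apply, starRingEnd_apply]
    rw [Finset.sum_comm]
    exact Finset.sum_congr rfl fun i _ => Finset.sum_congr rfl fun j _ => by ring
  have e : sesqForm fourMat x x = 100 * (x ⬝ᵥ star x) -
      sesqForm (vecMulVec relOne (star relOne)) x x -
      sesqForm (vecMulVec relTwo (star relTwo)) x x := by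
    simp [sesqForm, fourMat, sub_mulVec, smul_mulVec]
  have e1 : relOne ⬝ᵥ x = 5 * x 2 - (3 * x 0 + 4 * x 1) := by
    simp [dotProduct, Fin.sum_univ_four, relOne]; ring
  have e2 : relTwo ⬝ᵥ x = 5 * x 3 - (3 * x 0 + 4 * (I * x 1)) := by
    simp [dotProduct, Fin.sum_univ_four, relTwo]; ring
  rw [e, h, h, e1, e2]
  simp [dotProduct, Fin.sum_univ_four, normSq_apply]

lemma normSq_relation_le (x y z : ℂ) :
    normSq (5 * z - (3 * x + 4 * y)) ≤ 50 * (normSq x + normSq y + normSq z) := by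
  simp only [normSq_apply, sub_re, sub_im, add_re, add_im, mul_re, mul_im]
  simp
  nlinarith [sq_nonneg (4 * x.re - 3 * y.re), sq_nonneg (5 * x.re + 3 * z.re),
    sq_nonneg (5 * y.re + 4 * z.re), sq_nonneg (4 * x.im - 3 * y.im),
    sq_nonneg (5 * x.im + 3 * z.im), sq_nonneg (5 * y.im + 4 * z.im)]

lemma sesqForm_fourMat_nonneg (x : Fin 4 → ℂ) : 0 ≤ (sesqForm fourMat x x).re := by
  have h1 := normSq_relation_le (x 0) (x 1) (x 2)
  have h2 := normSq_relation_le (x 0) (I * x 1) (x 3)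
  rw [normSq_mul, normSq_I, one_mul] at h2
  rw [sesqForm_fourMat]
  linarith [normSq_nonneg (x 2), normSq_nonneg (x 3)]

lemma posSemidef_fourMat : fourMat.PosSemidef := by
  have hH : fourMat.IsHermitian := by
    ext i j
    simp [fourMat, vecMulVec_apply, one_apply, mul_comm, eq_comm, apply_ite]
  refine PosSemidef.of_dotProduct_mulVec_nonneg hH fun x => ?_
  rw [Complex.le_def]
  refine ⟨?_, (hH.im_star_dotProduct_mulVec_self x).symm⟩
  have := sesqForm_fourMat_nonneg (star x)
  rwa [sesqForm, star_star] at this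

/-- The quadratic form of `fourMat` does not reach `400` on the polydisc: equality would force
unimodular coordinates satisfying both relations, hence `x₀ conj x₁` would have real and imaginary
part zero. -/
lemma sesqForm_fourMat_lt {x : Fin 4 → ℂ} (hx : ∀ i, ‖x i‖ ≤ 1) :
    (sesqForm fourMat x x).re < 400 := by
  have hn : ∀ i, normSq (x i) ≤ 1 := fun i => by
    rw [normSq_eq_norm_sq]; exact pow_le_one₀ (norm_nonneg _) (hx i)
  rw [sesqForm_fourMat]
  by_contra hcon
  have a1 := normSq_nonneg (5 * x 2 - (3 * x 0 + 4 * x 1))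
  have a2 := normSq_nonneg (5 * x 3 - (3 * x 0 + 4 * (I * x 1)))
  have b0 : normSq (x 0) = 1 := by linarith [hn 0, hn 1, hn 2, hn 3]
  have b1 : normSq (x 1) = 1 := by linarith [hn 0, hn 1, hn 2, hn 3]
  have b2 : normSq (x 2) = 1 := by linarith [hn 0, hn 1, hn 2, hn 3]
  have b3 : normSq (x 3) = 1 := by linarith [hn 0, hn 1, hn 2, hn 3]
  have c1 : normSq (5 * x 2 - (3 * x 0 + 4 * x 1)) = 0 := by linarith [hn 0, hn 1, hn 2, hn 3]
  have c2 : normSq (5 * x 3 - (3 * x 0 + 4 * (I * x 1))) = 0 := by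
    linarith [hn 0, hn 1, hn 2, hn 3]
  have d1 := congrArg normSq (sub_eq_zero.1 (normSq_eq_zero.1 c1))
  have d2 := congrArg normSq (sub_eq_zero.1 (normSq_eq_zero.1 c2))
  have e0 : (x 0 * conj (x 1)).re = 0 := by
    simp [normSq_apply] at d1 b0 b1 b2 ⊢
    nlinarith
  have e1 : (x 0 * conj (x 1)).im = 0 := by
    simp [normSq_apply] at d2 b0 b1 b3 ⊢
    nlinarith
  have e2 : normSq (x 0 * conj (x 1)) = 0 := by rw [normSq_apply, e0, e1]; simp
  rw [normSq_mul, normSq_conj, b0, b1] at e2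
  norm_num at e2

/-- For a positive semidefinite matrix the norm of the associated map on `ℓ_∞^N` is controlled by
its quadratic form on the polydisc. -/
lemma norm_mapOfMatrix_le {N : ℕ} {a : Matrix (Fin N) (Fin N) ℂ} (ha : a.PosSemidef) {M : ℝ}
    (hM0 : 0 ≤ M) (hM : ∀ x : Fin N → ℂ, (∀ i, ‖x i‖ ≤ 1) → (sesqForm a x x).re ≤ M) :
    ‖mapOfMatrix a‖ ≤ M := by
  have key : ∀ x y : Fin N → ℂ, (∀ i, ‖x i‖ ≤ 1) → (∀ i, ‖y i‖ ≤ 1) → ‖sesqForm a x y‖ ≤ M := by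
    intro x y hx hy
    -- rotate `x` by a phase to make the form real and non-negative
    set w : ℂ := conj (exp (arg (sesqForm a x y) * I)) with hw
    have hw1 : ‖w‖ = 1 := by rw [hw, norm_conj, norm_exp_ofReal_mul_I]
    have h1 : sesqForm a (w • x) y = ‖sesqForm a x y‖ := by
      set θ := arg (sesqForm a x y) with hθ
      rw [sesqForm_smul_left, hw]
      conv_lhs => rw [← norm_mul_exp_arg_mul_I (sesqForm a x y), ← hθ]
      rw [mul_left_comm, mul_comm (conj _), mul_conj, normSq_eq_norm_sq, norm_exp_ofReal_mul_I]
      simp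
    have h2 := re_sesqForm_le ha (w • x) y
    rw [h1, ofReal_re] at h2
    have h3 := hM (w • x) fun i => by simpa [hw1] using hx i
    linarith [hM y hy]
  refine ContinuousLinearMap.opNorm_le_bound₂ _ hM0 fun x y => ?_
  have hscale : ∀ z : LinfC N, ∃ z' : LinfC N, (∀ i, ‖z' i‖ ≤ 1) ∧ z = (‖z‖ : ℂ) • z' := by
    intro z
    by_cases hz : z = 0
    · exact ⟨0, by simp, by simp [hz]⟩
    · have hz' : ‖z‖ ≠ 0 := norm_ne_zero_iff.2 hz
      refine ⟨(‖z‖ : ℂ)⁻¹ • z, fun i => ?_, ?_⟩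
      · rw [PiLp.smul_apply, norm_smul, norm_inv, norm_real, norm_norm]
        exact inv_mul_le_one_of_le₀ (PiLp.norm_apply_le z i) (norm_nonneg _)
      · rw [smul_smul, mul_inv_cancel₀ (by exact_mod_cast hz'), one_smul]
  obtain ⟨x', hx', ex⟩ := hscale x
  obtain ⟨y', hy', ey⟩ := hscale y
  have h := key x'.ofLp (star y'.ofLp) hx' (by simpa using hy')
  rw [← matrixOf_mapOfMatrix a, ← apply_eq_sesqForm] at h
  have e : mapOfMatrix a x y = (‖x‖ : ℂ) * ((‖y‖ : ℂ) * mapOfMatrix a x' y') := by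
    conv_lhs => rw [ex, ey]
    simp
  rw [e, norm_mul, norm_mul, norm_real, norm_real, norm_norm, norm_norm]
  calc ‖x‖ * (‖y‖ * ‖mapOfMatrix a x' y'‖) ≤ ‖x‖ * (‖y‖ * M) := by gcongr
    _ = M * ‖x‖ * ‖y‖ := by ring

lemma one_lt_KGposC_four : 1 < KGposC 4 2 := by
  -- by compactness the strict bound `400` on the form can be improved
  obtain ⟨x₀, hx₀, hmax⟩ := (isCompact_closedBall (0 : Fin 4 → ℂ) 1).exists_isMaxOn
    ⟨0, by simp⟩ (f := fun x => (sesqForm fourMat x x).re) (by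
      simp only [sesqForm_fourMat, normSq_apply]
      fun_prop)
  have hball : ∀ x : Fin 4 → ℂ, x ∈ Metric.closedBall (0 : Fin 4 → ℂ) 1 ↔ ∀ i, ‖x i‖ ≤ 1 := by
    intro x
    rw [mem_closedBall_zero_iff, pi_norm_le_iff_of_nonneg zero_le_one]
  set M := max (sesqForm fourMat x₀ x₀).re 1 with hM
  have hM1 : 1 ≤ M := le_max_right _ _
  have hM0 : 0 < M := by linarith
  have hM400 : M < 400 := max_lt (sesqForm_fourMat_lt ((hball x₀).1 hx₀)) (by norm_num)
  have hMnn : (0 : ℂ) ≤ ((M⁻¹ : ℝ) : ℂ) := by exact_mod_cast (inv_pos.2 hM0).le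
  have hpsd : (((M⁻¹ : ℝ) : ℂ) • fourMat).PosSemidef := posSemidef_fourMat.smul hMnn
  have hnorm : ‖mapOfMatrix (((M⁻¹ : ℝ) : ℂ) • fourMat)‖ ≤ 1 := by
    refine norm_mapOfMatrix_le hpsd zero_le_one fun x hx => ?_
    have : sesqForm (((M⁻¹ : ℝ) : ℂ) • fourMat) x x = ((M⁻¹ : ℝ) : ℂ) * sesqForm fourMat x x := by
      simp [sesqForm, smul_mulVec]
    rw [this, re_ofReal_mul]
    have h : (sesqForm fourMat x x).re ≤ M := (hmax ((hball x).2 hx)).trans (le_max_left _ _)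
    calc M⁻¹ * (sesqForm fourMat x x).re ≤ M⁻¹ * M := by gcongr
      _ = 1 := inv_mul_cancel₀ hM0.ne'
  have h := sum_norm_le_KGposC hpsd hnorm (v := fourVec) fun i => (norm_fourVec i).le
  have hval : ∀ j, ‖∑ i, (((M⁻¹ : ℝ) : ℂ) • fourMat) i j • fourVec i‖ = M⁻¹ * 100 := by
    intro j
    simp_rw [Matrix.smul_apply, smul_assoc]
    rw [← Finset.smul_sum, sum_fourMat_smul, norm_smul, norm_smul, norm_fourVec, norm_real,
      Real.norm_of_nonneg (inv_pos.2 hM0).le]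
    norm_num
  simp_rw [hval] at h
  rw [Finset.sum_const, Finset.card_univ, Fintype.card_fin, nsmul_eq_mul] at h
  refine lt_of_lt_of_le ?_ h
  have : 1 < M⁻¹ * 400 := by
    rw [inv_mul_eq_div, lt_div_iff₀ hM0]; linarith
  push_cast
  linarith

end Four

/-- (i) `sup_{m ≥ 1} K_G⁺(ℓ_∞², ℓ_2^m) = 1` and `sup_{m ≥ 1} K_G⁺(ℓ_∞³, ℓ_2^m) = 1`;
(ii) `K_G⁺(ℓ_∞⁴, ℓ_2²) > 1` (complex scalars). -/
theorem statement19 :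
    sSup { r : ℝ | ∃ m : ℕ, 1 ≤ m ∧ r = KGposC 2 m } = 1 ∧
    sSup { r : ℝ | ∃ m : ℕ, 1 ≤ m ∧ r = KGposC 3 m } = 1 ∧
    1 < KGposC 4 2 := by
  exact ⟨sSup_KGposC_eq_one (n := 1) (by norm_num), sSup_KGposC_eq_one (n := 2) (by norm_num),
    one_lt_KGposC_four⟩
end
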